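/- arXiv:1604.07039 — 3 statements merged into one kernel-verified Lean document; each statement's English description precedes it below -/
import Mathlib

section
/- (Lemma 2, part o3) Suppose X^n ⊂ ℝ^d (d ≥ 2) is in general position and M(X^n) has affine dimension d. Let z_1 be a point in the interior of M(X^n) with B̃_{z_1} ≠ ∅. Then for every z ∈ B̃_{z_1} one has B_z ⊆ B_{z_1} and z_1 ∉ B_z; that is, B_z ⊆ B̃_{z_1}. -/
open scoped RealInnerProductSpace
open MeasureTheory

noncomputable section

/-- `E d` is the Euclidean space `ℝ^d`. -/
abbrev E (d : ℕ) : Type := EuclideanSpace ℝ (Fin d)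

/-- A sample `X` of `n` points in `ℝ^d` is in general position if no affine hyperplane
(encoded as `{x | ⟪v, x⟫ = c}` for some `v ≠ 0`) contains more than `d` of the points. -/
def inGeneralPosition {d n : ℕ} (X : Fin n → E d) : Prop :=
  ∀ v : E d, v ≠ 0 → ∀ c : ℝ, ({i : Fin n | ⟪v, X i⟫ = c} : Set (Fin n)).ncard ≤ d

/-- Number of sample points in the closed halfspace `{z | ⟪u, z⟫ ≤ ⟪u, x⟫}`. -/
def sideCount {d n : ℕ} (X : Fin n → E d) (u x : E d) : ℕ :=
  ({i : Fin n | ⟪u, X i⟫ ≤ ⟪u, x⟫} : Set (Fin n)).ncard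

/-- Tukey's halfspace depth of `x` with respect to the sample `X`. -/
def depth {d n : ℕ} (X : Fin n → E d) (x : E d) : ℝ :=
  sInf {r : ℝ | ∃ u : E d, ‖u‖ = 1 ∧ r = (sideCount X u x : ℝ) / (n : ℝ)}

/-- The maximum Tukey depth `λ*` of the sample `X`. -/
def maxDepth {d n : ℕ} (X : Fin n → E d) : ℝ :=
  sSup (Set.range (depth X))

/-- The set `M(X)` of deepest points. -/
def MSet {d n : ℕ} (X : Fin n → E d) : Set (E d) :=
  {x | depth X x = maxDepth X}

/-- `U_x`: the set of optimal (unit) directions realizing the depth at `x`. -/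
def USet {d n : ℕ} (X : Fin n → E d) (x : E d) : Set (E d) :=
  {u | ‖u‖ = 1 ∧ (sideCount X u x : ℝ) / (n : ℝ) = depth X x}

/-- `H_{x,y}`: the open hemisphere of unit directions `u` with `⟪u, x⟫ < ⟪u, y⟫`. -/
def HSet {d : ℕ} (x y : E d) : Set (E d) :=
  {u | ‖u‖ = 1 ∧ ⟪u, x⟫ < ⟪u, y⟫}

/-- `B_z`. -/
def BSet {d n : ℕ} (X : Fin n → E d) (z : E d) : Set (E d) :=
  {x | x ∈ MSet X ∧ USet X x ∩ HSet x z = ∅}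

/-- `B̃_z = B_z \ {z}`. -/
def BTilde {d n : ℕ} (X : Fin n → E d) (z : E d) : Set (E d) :=
  BSet X z \ {z}

/-- `v` is a unit vector normal to an affine hyperplane spanned by `d` of the sample points. -/
def normalToSampleHyperplane {d n : ℕ} (X : Fin n → E d) (v : E d) : Prop :=
  ‖v‖ = 1 ∧ ∃ (s : Finset (Fin n)) (c : ℝ), s.card = d ∧
    (affineSpan ℝ (X '' (s : Set (Fin n))) : Set (E d)) = {x : E d | ⟪v, x⟫ = c}

/-- Condition (2.1) on a unit direction `u`. -/
def cond21 {d n : ℕ} (X : Fin n → E d) (u : E d) : Prop :=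
  ∀ v : E d, normalToSampleHyperplane X v → ⟪u, v⟫ ≠ 0

/-- `A` represents the columns of a `d × (d-1)` matrix which together with the unit
vector `u` form an orthonormal basis of `ℝ^d`. -/
def IsAu {d : ℕ} (u : E d) (A : Fin (d - 1) → E d) : Prop :=
  ‖u‖ = 1 ∧ Orthonormal ℝ A ∧ ∀ j, ⟪A j, u⟫ = 0

/-- The `A_u`-projection `A_u^T x ∈ ℝ^{d-1}` of a point `x ∈ ℝ^d`. -/
def proj {d : ℕ} (A : Fin (d - 1) → E d) (x : E d) : E (d - 1) :=
  (WithLp.equiv 2 (Fin (d - 1) → ℝ)).symm (fun j => ⟪A j, x⟫)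

/-- The embedding `A_u x = ∑ j x_j A_j ∈ ℝ^d` of a point `x ∈ ℝ^{d-1}`. -/
def embed {d : ℕ} (A : Fin (d - 1) → E d) (x : E (d - 1)) : E d :=
  ∑ j, x j • A j

/-- `λ₀ = inf_{u ∈ S^{d-1}} λ*(X_u^n)`, the infimum over all directions of the maximum
Tukey depth of the projected sample. -/
def lambda0 {d n : ℕ} (X : Fin n → E d) : ℝ :=
  sInf {r : ℝ | ∃ (u : E d) (A : Fin (d - 1) → E d),
    IsAu u A ∧ r = maxDepth (fun i => proj A (X i))}

/-- The average (barycenter) of a set `K ⊆ ℝ^d`, taken with respect to the Hausdorff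
measure of dimension equal to the affine dimension of `K`. -/
def setAverage {d : ℕ} (K : Set (E d)) : E d :=
  (μH[(Module.finrank ℝ (affineSpan ℝ K).direction : ℝ)] K).toReal⁻¹ •
    ∫ x in K, x ∂(μH[(Module.finrank ℝ (affineSpan ℝ K).direction : ℝ)])

/-- Tukey's halfspace median: the average of all deepest points. -/
def TukeyMedian {d n : ℕ} (X : Fin n → E d) : E d :=
  setAverage (MSet X)

/-- `m` contaminating points suffice to break down the Tukey median at `X`. -/
def breaksDown {d n : ℕ} (X : Fin n → E d) (m : ℕ) : Prop :=
  ∀ C : ℝ, ∃ Y : Fin m → E d, C < ‖TukeyMedian (Fin.append X Y) - TukeyMedian X‖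

/-- The finite sample (additional) breakdown point of the Tukey median at `X`. -/
def FSBP {d n : ℕ} (X : Fin n → E d) : ℝ :=
  sInf {r : ℝ | ∃ m : ℕ, 1 ≤ m ∧ breaksDown X m ∧ r = (m : ℝ) / ((n : ℝ) + (m : ℝ))}

theorem aux_sideCount_le {d n : ℕ} (X : Fin n → E d) (u x : E d) : sideCount X u x ≤ n := by
  have := Set.ncard_le_card ({i : Fin n | ⟪u, X i⟫ ≤ ⟪u, x⟫} : Set (Fin n))
  simpa [sideCount] using this

theorem aux_depth_le {d n : ℕ} (X : Fin n → E d) (u x : E d) (hu : ‖u‖ = 1) :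
    depth X x ≤ (sideCount X u x : ℝ) / (n : ℝ) := by
  refine csInf_le ⟨0, ?_⟩ ⟨u, hu, rfl⟩
  rintro r ⟨v, -, rfl⟩
  positivity

theorem aux_U_nonempty {d n : ℕ} (X : Fin n → E d) (x u : E d) (hu : ‖u‖ = 1) :
    ∃ v, v ∈ USet X x := by
  have hfin : {r : ℝ | ∃ u : E d, ‖u‖ = 1 ∧ r = (sideCount X u x : ℝ) / (n : ℝ)}.Finite := by
    refine ((Set.finite_Iic n).image (fun k : ℕ => (k : ℝ) / (n : ℝ))).subset ?_
    rintro r ⟨v, -, rfl⟩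
    exact ⟨_, aux_sideCount_le X v x, rfl⟩
  have hne : {r : ℝ | ∃ u : E d, ‖u‖ = 1 ∧ r = (sideCount X u x : ℝ) / (n : ℝ)}.Nonempty :=
    ⟨_, u, hu, rfl⟩
  obtain ⟨v, hv, h⟩ := hne.csInf_mem hfin
  exact ⟨v, hv, h.symm⟩

theorem aux_mono {d n : ℕ} (X : Fin n → E d) (u x z : E d) (hx : x ∈ MSet X) (hz : z ∈ MSet X)
    (hu : u ∈ USet X x) (h : ⟪u, z⟫ ≤ ⟪u, x⟫) : u ∈ USet X z := by
  refine ⟨hu.1, le_antisymm ?_ (aux_depth_le X u z hu.1)⟩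
  have h1 : depth X z = depth X x := Eq.trans hz (Eq.symm hx)
  rw [h1, ← hu.2]
  have : sideCount X u z ≤ sideCount X u x :=
    Set.ncard_le_ncard (fun i hi => le_trans hi h) (Set.toFinite _)
  gcongr

theorem aux_B {d n : ℕ} {X : Fin n → E d} {x z u : E d} (hx : x ∈ BSet X z)
    (hu : u ∈ USet X x) : ⟪u, z⟫ ≤ ⟪u, x⟫ := by
  by_contra h
  have : u ∈ USet X x ∩ HSet x z := ⟨hu, hu.1, not_le.1 h⟩
  rw [hx.2] at this
  exact this

theorem aux_no_boundary {d n : ℕ} (X : Fin n → E d) (z u : E d) (hz : z ∈ interior (MSet X))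
    (hu : u ∈ USet X z) (i : Fin n) : ⟪u, X i⟫ ≠ ⟪u, z⟫ := by
  intro hi
  obtain ⟨ε, hε, hb⟩ := Metric.mem_nhds_iff.1 (mem_interior_iff_mem_nhds.1 hz)
  have hu1 : ‖u‖ = 1 := hu.1
  have hmem : z - (ε / 2) • u ∈ MSet X := by
    apply hb
    rw [Metric.mem_ball, dist_eq_norm]
    have : z - (ε / 2) • u - z = -((ε / 2) • u) := by abel
    rw [this, norm_neg, norm_smul, hu1, Real.norm_of_nonneg (by positivity)]
    linarith
  have hin : ⟪u, z - (ε / 2) • u⟫ = ⟪u, z⟫ - ε / 2 := by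
    rw [inner_sub_right, inner_smul_right, real_inner_self_eq_norm_sq, hu1]; ring
  have h1 : depth X (z - (ε / 2) • u) = depth X z :=
    Eq.trans hmem (Eq.symm (interior_subset hz : z ∈ MSet X))
  have h2 := aux_depth_le X u (z - (ε / 2) • u) hu1
  rw [h1, ← hu.2] at h2
  have hn : (0 : ℝ) < n := by exact_mod_cast i.pos
  rw [div_le_div_iff_of_pos_right hn] at h2
  have h3 : sideCount X u z ≤ sideCount X u (z - (ε / 2) • u) := by exact_mod_cast h2
  have hsub : ({j : Fin n | ⟪u, X j⟫ ≤ ⟪u, z - (ε / 2) • u⟫} : Set (Fin n)) ⊆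
      {j : Fin n | ⟪u, X j⟫ ≤ ⟪u, z⟫} := by
    intro j hj
    simp only [Set.mem_ofPred_eq, hin] at hj ⊢
    linarith
  have heq := Set.eq_of_subset_of_ncard_le hsub h3 (Set.toFinite _)
  have : i ∈ ({j : Fin n | ⟪u, X j⟫ ≤ ⟪u, z - (ε / 2) • u⟫} : Set (Fin n)) := by
    rw [heq]; exact hi.le
  simp only [Set.mem_ofPred_eq, hin] at this
  linarith

theorem aux_perturb {d n : ℕ} (X : Fin n → E d) (z u w : E d)
    (hne : ∀ i, ⟪u, X i⟫ ≠ ⟪u, z⟫) :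
    ∃ t : ℝ, 0 < t ∧ ∀ i, (⟪u + t • w, X i⟫ ≤ ⟪u + t • w, z⟫ ↔ ⟪u, X i⟫ ≤ ⟪u, z⟫) := by
  have key : ∀ i, ∀ᶠ t : ℝ in nhds 0,
      (⟪u + t • w, X i⟫ ≤ ⟪u + t • w, z⟫ ↔ ⟪u, X i⟫ ≤ ⟪u, z⟫) := by
    intro i
    have c1 : Continuous fun t : ℝ => ⟪u + t • w, X i⟫ := by fun_prop
    have c2 : Continuous fun t : ℝ => ⟪u + t • w, z⟫ := by fun_prop
    rcases lt_or_gt_of_ne (hne i) with h | h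
    · have := c1.continuousAt.eventually_lt (x₀ := 0) c2.continuousAt (by simpa using h)
      filter_upwards [this] with t ht
      exact iff_of_true ht.le h.le
    · have := c2.continuousAt.eventually_lt (x₀ := 0) c1.continuousAt (by simpa using h)
      filter_upwards [this] with t ht
      exact iff_of_false (not_le.2 ht) (not_le.2 h)
  have hall := (Filter.eventually_all.2 key)
  have h2 := (hall.filter_mono (nhdsWithin_le_nhds (s := Set.Ioi 0))).and self_mem_nhdsWithin
  obtain ⟨t, h, ht⟩ := h2.exists
  exact ⟨t, ht, h⟩

theorem aux_not_mem {d n : ℕ} (X : Fin n → E d) (z₁ z : E d) (hz₁ : z₁ ∈ interior (MSet X))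
    (hz : z ∈ BTilde X z₁) : z₁ ∉ BSet X z := by
  intro hc
  have hw : z - z₁ ≠ 0 := sub_ne_zero.2 hz.2
  have hz₁M : z₁ ∈ MSet X := interior_subset hz₁
  obtain ⟨u, hu⟩ := aux_U_nonempty X z₁ (‖z - z₁‖⁻¹ • (z - z₁)) (norm_smul_inv_norm hw)
  have h1 := aux_B hc hu
  have h2 := aux_B hz.1 (aux_mono X u z₁ z hz₁M hz.1.1 hu h1)
  have h0 : ⟪u, z - z₁⟫ = 0 := by rw [inner_sub_right]; linarith
  obtain ⟨t, ht, hs⟩ := aux_perturb X z₁ u (z - z₁) (aux_no_boundary X z₁ u hz₁ hu)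
  have hpos : 0 < ⟪u + t • (z - z₁), z - z₁⟫ := by
    rw [inner_add_left, h0, real_inner_smul_left, real_inner_self_eq_norm_sq]
    have := norm_pos_iff.2 hw
    positivity
  have hv : u + t • (z - z₁) ≠ 0 := by
    intro h
    rw [h, inner_zero_left] at hpos
    exact lt_irrefl _ hpos
  have hvn : 0 < ‖u + t • (z - z₁)‖⁻¹ := inv_pos.2 (norm_pos_iff.2 hv)
  have hmem : ‖u + t • (z - z₁)‖⁻¹ • (u + t • (z - z₁)) ∈ USet X z₁ := by
    refine ⟨norm_smul_inv_norm hv, ?_⟩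
    rw [← hu.2]
    congr 2
    unfold sideCount
    congr 1
    ext i
    simp only [Set.mem_ofPred_eq]
    rw [← hs i, real_inner_smul_left, real_inner_smul_left, mul_le_mul_iff_right₀ hvn]
  have h3 := aux_B hc hmem
  rw [real_inner_smul_left, real_inner_smul_left, mul_le_mul_iff_right₀ hvn] at h3
  rw [inner_sub_right] at hpos
  linarith

/-- **Lemma 2, o3.** For every `z ∈ B̃_{z₁}` one has `B_z ⊆ B_{z₁}` and
`z₁ ∉ B_z`; that is, `B_z ⊆ B̃_{z₁}`. -/
theorem lemma2_o3 {d n : ℕ} (hd : 2 ≤ d) (X : Fin n → E d)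
    (hX : inGeneralPosition X) (hdim : affineSpan ℝ (MSet X) = ⊤)
    (z₁ : E d) (hz₁ : z₁ ∈ interior (MSet X)) (hB : (BTilde X z₁).Nonempty) :
    ∀ z ∈ BTilde X z₁, BSet X z ⊆ BSet X z₁ ∧ z₁ ∉ BSet X z ∧ BSet X z ⊆ BTilde X z₁ := by
  intro z hz
  have hno := aux_not_mem X z₁ z hz₁ hz
  have hsub : BSet X z ⊆ BSet X z₁ := by
    intro x hx
    refine ⟨hx.1, Set.eq_empty_iff_forall_notMem.2 ?_⟩
    rintro u ⟨hu, -, hlt⟩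
    have h1 := aux_B hx hu
    have h2 := aux_B hz.1 (aux_mono X u x z hx.1 hz.1.1 hu h1)
    linarith
  refine ⟨hsub, hno, fun x hx => ⟨hsub hx, ?_⟩⟩
  rintro rfl
  exact hno hx
end
end

section
/- (Lemma 5) Let X^n ⊂ ℝ^d (d ≥ 2) and let y ∈ ℝ^d lie outside the convex hull cov(X^n) of X^n. Then there exists u_0 ∈ S^{d−1} such that D(A_{u_0}^T y, X_{u_0}^n) = λ*(X_{u_0}^n); that is, the A_{u_0}-projection of y is a maximum-depth point of the projected sample X_{u_0}^n in ℝ^{d−1}. -/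
open scoped RealInnerProductSpace
open MeasureTheory

noncomputable section

section Helpers

open Set

/-- metric projection on a closed convex set -/
lemma exists_metric_proj {d : ℕ} (C : Set (E d)) (hne : C.Nonempty) (hcl : IsClosed C)
    (hcv : Convex ℝ C) :
    ∃ P : E d → E d, LipschitzWith 1 P ∧ ∀ x, P x ∈ C ∧ ∀ c ∈ C, ⟪x - P x, c - P x⟫ ≤ 0 := by
  have h1 : ∀ x : E d, ∃ p ∈ C, ∀ c ∈ C, ⟪x - p, c - p⟫ ≤ 0 := by
    intro x
    obtain ⟨p, hp, hpx⟩ := exists_norm_eq_iInf_of_complete_convex hne hcl.isComplete hcv x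
    exact ⟨p, hp, (norm_eq_iInf_iff_real_inner_le_zero hcv hp).1 hpx⟩
  choose P hP hP' using h1
  refine ⟨P, LipschitzWith.of_dist_le_mul fun x y => ?_, fun x => ⟨hP x, hP' x⟩⟩
  have a := hP' x (P y) (hP y)
  have b := hP' y (P x) (hP x)
  rw [dist_eq_norm, dist_eq_norm]
  have e : ‖P x - P y‖ ^ 2 ≤ ⟪x - y, P x - P y⟫ := by
    rw [← real_inner_self_eq_norm_sq]
    simp only [inner_sub_left, inner_sub_right] at *
    have := real_inner_comm (P x) (P y)
    linarith
  have f := real_inner_le_norm (x - y) (P x - P y)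
  have g : ‖P x - P y‖ * ‖P x - P y‖ ≤ ‖x - y‖ * ‖P x - P y‖ := by nlinarith
  rcases eq_or_lt_of_le (norm_nonneg (P x - P y)) with h | h
  · rw [← h]; positivity
  · simpa using le_of_mul_le_mul_right g h

/-- `det (1 + t A)` is polynomial in `t`. -/
lemma det_poly {d : ℕ} (A : E d →L[ℝ] E d) : ∃ p : Polynomial ℝ, p.natDegree ≤ d ∧
    ∀ t : ℝ, p.eval t = (1 + t • A).det := by
  classical
  let b := (EuclideanSpace.basisFun (Fin d) ℝ).toBasis
  let M := LinearMap.toMatrix b b (A : E d →ₗ[ℝ] E d)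
  refine ⟨Matrix.det ((Polynomial.X : Polynomial ℝ) • M.map Polynomial.C + (1 : Matrix (Fin d) (Fin d) ℝ).map Polynomial.C),
    by simpa using Polynomial.natDegree_det_X_add_C_le M 1, fun t => ?_⟩
  have : (1 + t • A).det = LinearMap.det ((1 + t • A : E d →L[ℝ] E d) : E d →ₗ[ℝ] E d) := rfl
  rw [this, ← LinearMap.det_toMatrix b]
  have e : LinearMap.toMatrix b b ((1 + t • A : E d →L[ℝ] E d) : E d →ₗ[ℝ] E d) = 1 + t • M := by
    have : ((1 + t • A : E d →L[ℝ] E d) : E d →ₗ[ℝ] E d) = LinearMap.id + t • (A : E d →ₗ[ℝ] E d) := rfl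
    rw [this, map_add, map_smul, LinearMap.toMatrix_id]
  rw [e, ← Polynomial.coe_evalRingHom, RingHom.map_det]
  congr 1
  ext i j
  simp [Matrix.one_apply]
  split_ifs <;> simp <;> ring

lemma det_one_add_pos {d : ℕ} (A : E d →L[ℝ] E d) (h : ‖A‖ < 1) : 0 < (1 + A).det := by
  have hne : ∀ s ∈ Icc (0:ℝ) 1, (1 + s • A).det ≠ 0 := by
    intro s hs h0
    have hk : ∃ v : E d, v ≠ 0 ∧ (1 + s • A) v = 0 := by
      have := LinearMap.bot_lt_ker_of_det_eq_zero (f := ((1 + s • A : E d →L[ℝ] E d) : E d →ₗ[ℝ] E d)) h0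
      obtain ⟨v, hv, hv0⟩ := (Submodule.ne_bot_iff _).1 this.ne'
      exact ⟨v, hv0, hv⟩
    obtain ⟨v, hv, hv0⟩ := hk
    have h1 : v = -(s • A v) := by
      rw [eq_neg_iff_add_eq_zero]; simpa using hv0
    have h2 : ‖v‖ = s * ‖A v‖ := by
      conv_lhs => rw [h1]
      rw [norm_neg, norm_smul, Real.norm_of_nonneg hs.1]
    have h3 := A.le_opNorm v
    have h4 : 0 < ‖v‖ := norm_pos_iff.2 hv
    have h5 : s * ‖A v‖ ≤ 1 * ‖A v‖ := mul_le_mul_of_nonneg_right hs.2 (norm_nonneg _)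
    nlinarith
  obtain ⟨p, -, hp⟩ := det_poly A
  have hc : ContinuousOn (fun s : ℝ => (1 + s • A).det) (Icc 0 1) := by
    simp_rw [← hp]; exact p.continuous.continuousOn
  by_contra hcon
  push Not at hcon
  have := intermediate_value_Icc' (zero_le_one) hc
  have h0 : (0:ℝ) ∈ Icc ((1 + (1:ℝ) • A).det) ((1 + (0:ℝ) • A).det) := by
    refine ⟨by simpa using hcon, ?_⟩
    simp [ContinuousLinearMap.det]
  obtain ⟨s, hs, hs0⟩ := this h0
  exact hne s hs hs0

lemma volume_step {d : ℕ} (h : E d → E d) (h' : E d → E d →L[ℝ] E d) (K : NNReal)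
    (hL : LipschitzWith K h) (h0 : ∀ x, 1 ≤ ‖x‖ → h x = 0)
    (hd : ∀ x ∈ Metric.ball (0 : E d) 1, HasFDerivAt h (h' x) x) (t : NNReal) (ht : t * K < 1) :
    IntegrableOn (fun x => (1 + (t:ℝ) • h' x).det) (Metric.ball (0 : E d) 1) ∧
    ∫ x in Metric.ball (0 : E d) 1, (1 + (t:ℝ) • h' x).det = volume.real (Metric.ball (0 : E d) 1) := by
  set f : E d → E d := fun x => x + (t:ℝ) • h x with hf
  have hLt : LipschitzWith (t * K) (fun x => (t:ℝ) • h x) := by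
    refine LipschitzWith.of_dist_le_mul fun x y => ?_
    rw [dist_smul₀]
    have := hL.dist_le_mul x y
    simp only [NNReal.coe_mul, Real.norm_eq_abs, NNReal.abs_eq]
    rw [mul_assoc]; gcongr
  have hA : ApproximatesLinearOn f ((ContinuousLinearEquiv.refl ℝ (E d) : E d ≃L[ℝ] E d) : E d →L[ℝ] E d) univ (t * K) := by
    intro x _ y _
    have := hLt.dist_le_mul x y
    rw [dist_eq_norm, dist_eq_norm] at this
    have e : f x - f y - (x - y) = (t:ℝ) • h x - (t:ℝ) • h y := by
      simp only [hf]; abel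
    change ‖f x - f y - (x - y)‖ ≤ _
    rw [e]; exact this
  have hinj : Function.Injective f := by
    intro x y hxy
    have := hLt.dist_le_mul x y
    have e : x - y = -((t:ℝ) • h x - (t:ℝ) • h y) := by
      have : x + (t:ℝ) • h x = y + (t:ℝ) • h y := hxy
      rw [neg_sub, sub_eq_sub_iff_add_eq_add, this, add_comm]
    rw [dist_eq_norm, dist_eq_norm, ← norm_neg, ← e] at this
    by_contra hne
    have hp : 0 < ‖x - y‖ := norm_pos_iff.2 (sub_ne_zero.2 hne)
    have : ((t * K : NNReal) : ℝ) < 1 := by exact_mod_cast ht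
    nlinarith
  have hsurj : Function.Surjective f := by
    refine hA.surjective ?_
    rcases subsingleton_or_nontrivial (E d) with hs | hs
    · exact Or.inl hs
    · right
      have : ‖((ContinuousLinearEquiv.refl ℝ (E d)).symm : E d →L[ℝ] E d)‖₊ = 1 := by
        ext; simp
      rw [this]; simpa using ht
  have himg : f '' Metric.ball 0 1 = Metric.ball 0 1 := by
    have hout : ∀ x, 1 ≤ ‖x‖ → f x = x := fun x hx => by simp [hf, h0 x hx]
    ext y
    constructor
    · rintro ⟨x, hx, rfl⟩
      by_contra hcon
      have h1 : 1 ≤ ‖f x‖ := by simpa using hcon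
      have := hinj (hout _ h1)
      rw [this] at h1
      simp at hx; linarith
    · intro hy
      obtain ⟨x, rfl⟩ := hsurj y
      refine ⟨x, ?_, rfl⟩
      by_contra hcon
      have h1 : 1 ≤ ‖x‖ := by simpa using hcon
      rw [hout x h1] at hy
      exact hcon hy
  have hder : ∀ x ∈ Metric.ball (0 : E d) 1, HasFDerivWithinAt f (1 + (t:ℝ) • h' x) (Metric.ball 0 1) x := by
    intro x hx
    exact ((hasFDerivAt_id x).add ((hd x hx).const_smul (t:ℝ))).hasFDerivWithinAt
  have hpos : ∀ x ∈ Metric.ball (0 : E d) 1, |(1 + (t:ℝ) • h' x).det| • (1:ℝ) = (1 + (t:ℝ) • h' x).det := by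
    intro x hx
    rw [smul_eq_mul, mul_one, abs_of_pos]
    apply det_one_add_pos
    have := (hd x hx).le_of_lipschitz hL
    rw [norm_smul, Real.norm_of_nonneg t.coe_nonneg]
    calc (t:ℝ) * ‖h' x‖ ≤ t * K := by gcongr
      _ < 1 := by exact_mod_cast ht
  have hm : MeasurableSet (Metric.ball (0 : E d) 1) := measurableSet_ball
  constructor
  · have := (integrableOn_image_iff_integrableOn_abs_det_fderiv_smul volume hm hder hinj.injOn (fun _ => (1:ℝ))).1
      (by rw [himg]; exact integrableOn_const (measure_ball_lt_top.ne))
    exact this.congr_fun (fun x hx => hpos x hx) hm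
  · have := integral_image_eq_integral_abs_det_fderiv_smul volume hm hder hinj.injOn (fun _ => (1:ℝ))
    rw [himg, setIntegral_congr_fun hm (fun x hx => hpos x hx)] at this
    rw [← this]; simp

lemma no_pert {d : ℕ} (h : E d → E d) (h' : E d → E d →L[ℝ] E d) (K : NNReal)
    (hL : LipschitzWith K h) (h0 : ∀ x, 1 ≤ ‖x‖ → h x = 0)
    (hd : ∀ x ∈ Metric.ball (0 : E d) 1, HasFDerivAt h (h' x) x)
    (hdet : ∀ x ∈ Metric.ball (0 : E d) 1, (1 + h' x).det = 0) : False := by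
  let v : ℕ → NNReal := fun j => (j : NNReal) / ((d + 1) * (K + 1))
  have hv : ∀ j ∈ Finset.range (d + 1), v j * K < 1 := by
    intro j hj
    have hj : (j : NNReal) ≤ d := by exact_mod_cast Nat.lt_succ_iff.1 (Finset.mem_range.1 hj)
    simp only [v]
    rw [div_mul_eq_mul_div, div_lt_one (by positivity)]
    calc (j : NNReal) * K ≤ d * K := by gcongr
      _ ≤ d * (K + 1) := by gcongr; simp
      _ < (d + 1) * (K + 1) := by gcongr; simp
  have hinj : Set.InjOn (fun j => (v j : ℝ)) (Finset.range (d + 1)) := by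
    intro i _ j _ hij
    have : v i = v j := NNReal.coe_injective hij
    simp only [v] at this
    rw [div_left_inj' (by positivity)] at this
    exact_mod_cast this
  let L : ℕ → ℝ := fun j => (Lagrange.basis (Finset.range (d + 1)) (fun j => (v j : ℝ)) j).eval 1
  have hsum : ∑ j ∈ Finset.range (d + 1), L j = 1 := by
    have := Lagrange.sum_basis hinj (by simp)
    simp only [L, ← Polynomial.eval_finsetSum, this]; simp
  have hlag : ∀ A : E d →L[ℝ] E d, (1 + A).det = ∑ j ∈ Finset.range (d + 1), L j * (1 + (v j : ℝ) • A).det := by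
    intro A
    obtain ⟨p, hp, hpe⟩ := det_poly A
    have h1 : p = _ := Lagrange.eq_interpolate (f := p) hinj (by
      rw [Finset.card_range]
      exact lt_of_le_of_lt (Polynomial.degree_le_natDegree) (by exact_mod_cast Nat.lt_succ_of_le hp))
    have h2 := hpe 1
    rw [one_smul] at h2
    rw [← h2, h1, Lagrange.interpolate_apply, Polynomial.eval_finsetSum]
    refine Finset.sum_congr rfl fun j _ => ?_
    rw [Polynomial.eval_mul, Polynomial.eval_C, hpe, mul_comm]
  have hm : MeasurableSet (Metric.ball (0 : E d) 1) := measurableSet_ball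
  have key : ∫ x in Metric.ball (0 : E d) 1, (1 + h' x).det = volume.real (Metric.ball (0 : E d) 1) := by
    rw [setIntegral_congr_fun hm (fun x _ => hlag (h' x))]
    rw [integral_finsetSum]
    · simp_rw [integral_const_mul]
      rw [Finset.sum_congr rfl fun j hj => by rw [(volume_step h h' K hL h0 hd (v j) (hv j hj)).2]]
      rw [← Finset.sum_mul, hsum, one_mul]
    · intro j hj
      exact (volume_step h h' K hL h0 hd (v j) (hv j hj)).1.const_mul _
  rw [setIntegral_congr_fun hm (g := fun _ => (0:ℝ)) (fun x hx => hdet x hx)] at key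
  have : 0 < volume.real (Metric.ball (0 : E d) 1) :=
    ENNReal.toReal_pos (Metric.measure_ball_pos _ _ one_pos).ne' measure_ball_lt_top.ne
  simp at key
  rw [← key] at this
  exact lt_irrefl _ this

lemma no_smooth {d : ℕ} (g : E d → E d) (hg : ContDiff ℝ 1 g) (hout : ∀ x, 1 ≤ ‖x‖ → g x = x)
    (hne : ∀ x, g x ≠ 0) : False := by
  set r : E d → E d := fun x => ‖g x‖⁻¹ • g x with hr
  have hrc : ContDiff ℝ 1 r :=
    ((hg.norm ℝ hne).inv (fun x => norm_ne_zero_iff.2 (hne x))).smul hg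
  have hrn : ∀ x, ‖r x‖ = 1 := by
    intro x
    simp only [hr, norm_smul, norm_inv, norm_norm]
    exact inv_mul_cancel₀ (norm_ne_zero_iff.2 (hne x))
  set k : E d → E d := fun x => r x - x with hk
  have hkc : ContDiff ℝ 1 k := hrc.sub contDiff_id
  have hk0 : ∀ x, ‖x‖ = 1 → k x = 0 := by
    intro x hx
    simp [hk, hr, hout x hx.ge, hx]
  let B := Metric.closedBall (0 : E d) 1
  have hBc : IsCompact B := isCompact_closedBall _ _
  obtain ⟨M, hM⟩ := hBc.exists_bound_of_continuousOn (hkc.continuous_fderiv one_ne_zero).continuousOn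
  have hLk : LipschitzOnWith M.toNNReal k B := by
    refine Convex.lipschitzOnWith_of_nnnorm_fderiv_le (𝕜 := ℝ)
      (fun x _ => hkc.differentiable one_ne_zero x) (fun x hx => ?_) (convex_closedBall _ _)
    exact NNReal.le_toNNReal_of_coe_le (hM x hx)
  obtain ⟨P, hPL, hP⟩ := exists_metric_proj B ⟨0, by simp [B]⟩ Metric.isClosed_closedBall (convex_closedBall _ _)
  have hPin : ∀ x, ‖x‖ ≤ 1 → P x = x := by
    intro x hx
    have := (hP x).2 x (by simpa [B] using hx)
    rw [real_inner_self_eq_norm_sq] at this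
    have h2 := norm_eq_zero.1 ((pow_eq_zero_iff two_ne_zero).1 (le_antisymm this (sq_nonneg _)))
    exact (sub_eq_zero.1 h2).symm
  have hPout : ∀ x, 1 ≤ ‖x‖ → ‖P x‖ = 1 := by
    intro x hx
    have h1 : ‖P x‖ ≤ 1 := by simpa [B] using (hP x).1
    by_cases hxp : x - P x = 0
    · have h3 := sub_eq_zero.1 hxp
      rw [← h3] at h1 ⊢; exact le_antisymm h1 hx
    · have hpos : 0 < ‖x - P x‖ := norm_pos_iff.2 hxp
      have h2 := (hP x).2 (‖x - P x‖⁻¹ • (x - P x)) (by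
        simp [B, norm_smul, inv_mul_cancel₀ hpos.ne'])
      rw [inner_sub_right, inner_smul_right, real_inner_self_eq_norm_sq] at h2
      have h3 : ‖x - P x‖⁻¹ * ‖x - P x‖ ^ 2 = ‖x - P x‖ := by field_simp
      have h4 := real_inner_le_norm (x - P x) (P x)
      rw [h3] at h2
      nlinarith
  refine no_pert (fun x => k (P x)) (fun x => fderiv ℝ k x) (M.toNNReal * 1) ?_ ?_ ?_ ?_
  · have := hLk.comp (hPL.lipschitzOnWith (s := univ)) (fun x _ => (hP x).1)
    exact lipschitzOnWith_univ.1 this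
  · intro x hx
    exact hk0 _ (hPout x hx)
  · intro x hx
    refine (hkc.differentiable one_ne_zero x).hasFDerivAt.congr_of_eventuallyEq ?_
    filter_upwards [Metric.isOpen_ball.mem_nhds hx] with z hz
    rw [hPin z (by simpa using (Metric.mem_ball.1 hz).le)]
  · intro x _
    have hdr := (hrc.differentiable one_ne_zero x).hasFDerivAt
    have e : 1 + fderiv ℝ k x = fderiv ℝ r x := by
      have : HasFDerivAt k (fderiv ℝ r x - 1) x := hdr.sub (hasFDerivAt_id x)
      rw [this.fderiv]; abel
    rw [e]
    have horth : ∀ w, ⟪r x, fderiv ℝ r x w⟫ = 0 := by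
      intro w
      have h1 := (hdr.inner ℝ hdr)
      have h2 : (fun t => ⟪r t, r t⟫) = fun _ => (1:ℝ) := by
        funext t; rw [real_inner_self_eq_norm_sq, hrn]; norm_num
      rw [h2] at h1
      have h3 := h1.unique (hasFDerivAt_const (1:ℝ) x)
      have h4 := congrArg (fun (F : E d →L[ℝ] ℝ) => F w) h3
      simp [fderivInnerCLM_apply] at h4
      have := real_inner_comm (r x) (fderiv ℝ r x w)
      linarith
    by_contra hdet
    have hu : IsUnit (LinearMap.det (fderiv ℝ r x : E d →ₗ[ℝ] E d)) := isUnit_iff_ne_zero.2 hdet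
    have hs := (LinearMap.isUnit_iff_range_eq_top _).1 ((LinearMap.isUnit_iff_isUnit_det _).2 hu)
    obtain ⟨w, hw⟩ := LinearMap.range_eq_top.1 hs (r x)
    have h1 := horth w
    have hw' : fderiv ℝ r x w = r x := hw
    rw [hw', real_inner_self_eq_norm_sq, hrn] at h1
    norm_num at h1

lemma brouwer_aux {d : ℕ} (f : E d → E d) (hf : Continuous f) (hb : ∀ x, ‖f x‖ ≤ 1 / 4) :
    ∃ x, f x = x := by
  by_contra! hcon
  have hcont : Continuous fun x => ‖f x - x‖ := (hf.sub continuous_id).norm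
  obtain ⟨x₀, -, hx₀⟩ := (isCompact_closedBall (0 : E d) 1).exists_isMinOn ⟨0, by simp⟩ hcont.continuousOn
  set δ := min (‖f x₀ - x₀‖) (1/4) with hδ
  have hδpos : 0 < δ := lt_min (norm_pos_iff.2 (sub_ne_zero.2 (hcon x₀))) (by norm_num)
  obtain ⟨F, hF⟩ := exists_contMDiffMap_forall_mem_convex_of_local_const (modelWithCornersSelf ℝ (E d))
    (n := (1 : ℕ∞)) (t := fun x => Metric.ball (f x) δ) (fun x => convex_ball _ _) (by
      intro x
      refine ⟨f x, ?_⟩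
      have := hf.continuousAt (x := x) (Metric.ball_mem_nhds (f x) hδpos)
      filter_upwards [this] with z hz
      rw [Metric.mem_ball, dist_comm]; exact hz)
  have hFc : ContDiff ℝ 1 (F : E d → E d) := by
    have := F.contMDiff.contDiff
    exact_mod_cast this
  have hF' : ∀ x, ‖F x - f x‖ < δ := fun x => by rw [← dist_eq_norm]; exact hF x
  have hFn : ∀ x, ‖F x‖ < 1 / 2 := by
    intro x
    have h1 := norm_add_le (F x - f x) (f x)
    rw [sub_add_cancel] at h1
    have := hF' x
    have := hb x
    have : δ ≤ 1/4 := min_le_right _ _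
    linarith
  let χ : ContDiffBump (0 : E d) := ⟨1/2, 3/4, by norm_num, by norm_num⟩
  refine no_smooth (fun x => x - χ x • F x) (contDiff_id.sub ((χ.contDiff).smul hFc)) ?_ ?_
  · intro x hx
    have : χ x = 0 := χ.zero_of_le_dist (by simp [χ]; linarith)
    simp [this]
  · intro x hx
    have hx : x = χ x • F x := sub_eq_zero.1 hx
    by_cases hxs : ‖x‖ ≤ 1 / 2
    · have h1 : χ x = 1 := χ.one_of_mem_closedBall (by simpa [χ] using hxs)
      rw [h1, one_smul] at hx
      have h2 := hF' x
      rw [← hx, norm_sub_rev] at h2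
      have h3 : ‖f x₀ - x₀‖ ≤ ‖f x - x‖ := hx₀ (by simp; linarith)
      have : δ ≤ ‖f x₀ - x₀‖ := min_le_left _ _
      linarith
    · have h1 : ‖x‖ = χ x * ‖F x‖ := by
        conv_lhs => rw [hx]
        rw [norm_smul, Real.norm_of_nonneg χ.nonneg]
      have h2 : χ x ≤ 1 := χ.le_one
      have := hFn x
      have := norm_nonneg (F x)
      have : χ x * ‖F x‖ ≤ 1 * ‖F x‖ := by gcongr
      linarith

lemma brouwer {d : ℕ} (f : E d → E d) (hf : Continuous f) (R : ℝ) (hR : 0 < R) (hb : ∀ x, ‖f x‖ ≤ R) :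
    ∃ x, f x = x := by
  obtain ⟨x, hx⟩ := brouwer_aux (fun x => (4 * R)⁻¹ • f ((4 * R) • x))
    ((hf.comp (continuous_const_smul (4 * R))).const_smul (4 * R)⁻¹) (by
      intro x
      rw [norm_smul, norm_inv, Real.norm_of_nonneg (by positivity)]
      have := hb ((4 * R) • x)
      rw [inv_mul_le_iff₀ (by positivity)]
      linarith)
  refine ⟨(4 * R) • x, ?_⟩
  conv_rhs => rw [← hx]
  rw [smul_smul, mul_inv_cancel₀ (by positivity), one_smul]

lemma variational {d : ℕ} (C : Set (E d)) (hne : C.Nonempty) (hc : IsCompact C) (hcv : Convex ℝ C)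
    (φ : C(C, E d)) : ∃ u : C, ∀ c ∈ C, ⟪φ u, c - u⟫ ≤ 0 := by
  obtain ⟨P, hPL, hP⟩ := exists_metric_proj C hne hc.isClosed hcv
  obtain ⟨R, hR⟩ := hc.isBounded.exists_norm_le
  let p : E d → C := fun x => ⟨P x, (hP x).1⟩
  have hp : Continuous p := hPL.continuous.subtype_mk _
  obtain ⟨x, hx⟩ := brouwer (fun x => P (P x + φ (p x)))
    (hPL.continuous.comp (hPL.continuous.add (φ.continuous.comp hp))) (max R 1) (by positivity)
    (fun x => (hR _ (hP _).1).trans (le_max_left _ _))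
  have hxC : x ∈ C := hx ▸ (hP _).1
  have hPx : P x = x := by
    have := (hP x).2 x hxC
    rw [real_inner_self_eq_norm_sq] at this
    have h2 := norm_eq_zero.1 ((pow_eq_zero_iff two_ne_zero).1 (le_antisymm this (sq_nonneg _)))
    exact (sub_eq_zero.1 h2).symm
  have hpx : p x = ⟨x, hxC⟩ := Subtype.ext hPx
  refine ⟨⟨x, hxC⟩, fun c hcC => ?_⟩
  have := (hP (P x + φ (p x))).2 c hcC
  have hx' : P (P x + φ (p x)) = x := hx
  rw [hx', hpx, hPx] at this
  simpa using this

/-- counting function for the central projection -/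
def cnt {d n : ℕ} (X : Fin n → E d) (w v u : E d) : ℕ :=
  ({i : Fin n | ⟪v, X i⟫ ≤ ⟪v, u⟫ * ⟪w, X i⟫} : Set (Fin n)).ncard

lemma cnt_usc {d n : ℕ} (X : Fin n → E d) (w v u : E d) :
    ∀ᶠ u' in nhds u, cnt X w v u' ≤ cnt X w v u := by
  have h : ∀ i : Fin n, ∀ᶠ u' in nhds u, ⟪v, X i⟫ ≤ ⟪v, u'⟫ * ⟪w, X i⟫ → ⟪v, X i⟫ ≤ ⟪v, u⟫ * ⟪w, X i⟫ := by
    intro i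
    by_cases hi : ⟪v, X i⟫ ≤ ⟪v, u⟫ * ⟪w, X i⟫
    · exact Filter.Eventually.of_forall fun _ _ => hi
    · push Not at hi
      have hc : Continuous fun u' : E d => ⟪v, u'⟫ * ⟪w, X i⟫ := by fun_prop
      filter_upwards [(hc.tendsto u).eventually_lt_const hi] with u' h1 h2
      linarith
  filter_upwards [Filter.eventually_all.2 h] with u' hu'
  exact Set.ncard_le_ncard (fun i hi => hu' i hi) (Set.toFinite _)

def CS {d n : ℕ} (X : Fin n → E d) (w : E d) (m : ℕ) : Set (E d) :=
  {u | ⟪w, u⟫ = 1 ∧ ∀ v, m ≤ cnt X w v u}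

lemma cnt_mono {d n : ℕ} (X : Fin n → E d) (w v u u' : E d) (hw : ∀ i, 0 < ⟪w, X i⟫)
    (h : ⟪v, u⟫ ≤ ⟪v, u'⟫) : cnt X w v u ≤ cnt X w v u' := by
  refine Set.ncard_le_ncard (fun i hi => ?_) (Set.toFinite _)
  have := mul_le_mul_of_nonneg_right h (hw i).le
  exact le_trans hi this

lemma CS_convex {d n : ℕ} (X : Fin n → E d) (w : E d) (hw : ∀ i, 0 < ⟪w, X i⟫) (m : ℕ) :
    Convex ℝ (CS X w m) := by
  rintro u ⟨hu, hu'⟩ z ⟨hz, hz'⟩ a b ha hb hab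
  refine ⟨by rw [inner_add_right, inner_smul_right, inner_smul_right, hu, hz]; linarith, fun v => ?_⟩
  have e : ⟪v, a • u + b • z⟫ = a * ⟪v, u⟫ + b * ⟪v, z⟫ := by
    rw [inner_add_right, inner_smul_right, inner_smul_right]
  have hb' : b = 1 - a := by linarith
  rcases le_total ⟪v, u⟫ ⟪v, z⟫ with h | h
  · exact (hu' v).trans (cnt_mono X w v _ _ hw (by rw [e]; subst hb'; nlinarith))
  · exact (hz' v).trans (cnt_mono X w v _ _ hw (by rw [e]; subst hb'; nlinarith))

lemma CS_closed {d n : ℕ} (X : Fin n → E d) (w : E d) (m : ℕ) : IsClosed (CS X w m) := by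
  have : CS X w m = {u | ⟪w, u⟫ = 1} ∩ ⋂ v, {u | m ≤ cnt X w v u} := by
    ext u; simp [CS]
  rw [this]
  refine (isClosed_eq (by fun_prop) continuous_const).inter (isClosed_iInter fun v => ?_)
  rw [← isOpen_compl_iff, isOpen_iff_mem_nhds]
  intro u hu
  have hu : cnt X w v u < m := by simpa using hu
  filter_upwards [cnt_usc X w v u] with u' h
  simpa using lt_of_le_of_lt h hu

lemma CS_bdd {d n : ℕ} (X : Fin n → E d) (w : E d) (hw : ∀ i, 0 < ⟪w, X i⟫) (m : ℕ) (hm : 1 ≤ m) :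
    Bornology.IsBounded (CS X w m) := by
  refine isBounded_iff_forall_norm_le.2 ⟨∑ i, ‖X i‖ / ⟪w, X i⟫, ?_⟩
  rintro u ⟨-, hu⟩
  have h1 := hm.trans (hu (-u))
  obtain ⟨i, hi⟩ := Set.nonempty_of_ncard_ne_zero (s := {i : Fin n | ⟪-u, X i⟫ ≤ ⟪-u, u⟫ * ⟪w, X i⟫})
    (Nat.one_le_iff_ne_zero.1 h1)
  simp only [Set.mem_ofPred_eq, inner_neg_left, real_inner_self_eq_norm_sq] at hi
  have h2 := real_inner_le_norm u (X i)
  have hwi := hw i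
  have h3 : ‖u‖ * (‖u‖ * ⟪w, X i⟫) ≤ ‖u‖ * ‖X i‖ := by nlinarith
  have h4 : ‖u‖ ≤ ‖X i‖ / ⟪w, X i⟫ := by
    rw [le_div_iff₀ hwi]
    rcases eq_or_lt_of_le (norm_nonneg u) with h | h
    · rw [← h]; simp
    · exact le_of_mul_le_mul_left h3 h
  refine h4.trans ?_
  exact Finset.single_le_sum (f := fun i => ‖X i‖ / ⟪w, X i⟫)
    (fun j _ => div_nonneg (norm_nonneg _) (hw j).le) (Finset.mem_univ i)

lemma core {d n : ℕ} (X : Fin n → E d) (w : E d) (hw : ∀ i, 0 < ⟪w, X i⟫) (hn : 0 < n) :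
    ∃ (u : E d) (m : ℕ), ⟪w, u⟫ = 1 ∧
      (∀ v, ⟪v, u⟫ = 0 → m ≤ ({i : Fin n | ⟪v, X i⟫ ≤ 0} : Set (Fin n)).ncard) ∧
      ∀ x, ∃ v, ⟪v, u⟫ = 0 ∧ ({i : Fin n | ⟪v, X i⟫ ≤ ⟪v, x⟫} : Set (Fin n)).ncard ≤ m := by
  classical
  have hex : ∃ m, ¬ (CS X w (m + 1)).Nonempty := by
    refine ⟨n, ?_⟩
    rintro ⟨u, -, hu⟩
    have h1 : cnt X w 0 u ≤ n := by
      have := Set.ncard_le_card ({i : Fin n | ⟪(0 : E d), X i⟫ ≤ ⟪(0 : E d), u⟫ * ⟪w, X i⟫} : Set (Fin n))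
      simpa [cnt] using this
    have := hu 0
    omega
  set m := Nat.find hex with hm
  have hmem : ¬ (CS X w (m + 1)).Nonempty := Nat.find_spec hex
  have hm1 : 1 ≤ m := by
    by_contra h0
    have h0 : m = 0 := by omega
    rw [h0] at hmem
    apply hmem
    let i : Fin n := ⟨0, hn⟩
    have hi := hw i
    refine ⟨(⟪w, X i⟫)⁻¹ • X i, by rw [inner_smul_right, inv_mul_cancel₀ hi.ne'], fun v => ?_⟩
    refine Nat.one_le_iff_ne_zero.2 (Set.ncard_ne_zero_of_mem (a := i) ?_ (Set.toFinite _))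
    simp only [Set.mem_ofPred_eq, inner_smul_right]
    rw [mul_comm, ← mul_assoc, mul_inv_cancel₀ hi.ne', one_mul]
  have hne : (CS X w m).Nonempty := by
    have := Nat.find_min hex (m := m - 1) (by omega)
    rw [not_not] at this
    rwa [Nat.sub_add_cancel hm1] at this
  have hcomp : IsCompact (CS X w m) := Metric.isCompact_of_isClosed_isBounded (CS_closed X w m) (CS_bdd X w hw m hm1)
  have hsmall : ∀ u : E d, ⟪w, u⟫ = 1 → ∃ v, cnt X w v u ≤ m := by
    intro u hu
    by_contra! h
    exact hmem ⟨u, hu, fun v => h v⟩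
  suffices h : ∃ u ∈ CS X w m, ∀ x, ∃ v, ⟪v, u⟫ = 0 ∧ ({i : Fin n | ⟪v, X i⟫ ≤ ⟪v, x⟫} : Set (Fin n)).ncard ≤ m by
    obtain ⟨u, hu, hx⟩ := h
    refine ⟨u, m, hu.1, fun v hv => ?_, hx⟩
    have := hu.2 v
    simpa [cnt, hv] using this
  by_contra! hcon
  have hcon' : ∀ u : CS X w m, ∃ x, ⟪w, x⟫ = 0 ∧ ∀ v, ⟪v, (u : E d)⟫ = 0 →
      m < ({i : Fin n | ⟪v, X i⟫ ≤ ⟪v, x⟫} : Set (Fin n)).ncard := by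
    rintro ⟨u, hu⟩
    obtain ⟨x, hx⟩ := hcon u hu
    refine ⟨x - ⟪w, x⟫ • u, by rw [inner_sub_right, inner_smul_right, hu.1]; ring, fun v hv => ?_⟩
    have e : ⟪v, x - ⟪w, x⟫ • u⟫ = ⟪v, x⟫ := by
      simp only at hv
      rw [inner_sub_right, inner_smul_right, hv]; ring
    rw [e]
    exact hx v hv
  choose x hxw hx using hcon'
  obtain ⟨φ, hφ⟩ := exists_continuous_forall_mem_convex_of_local (X := CS X w m) (E := E d)
    (t := fun u => {f : E d | 0 < ⟪f, x u⟫}) (by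
      intro u f hf g hg a b ha hb hab
      simp only [Set.mem_ofPred_eq] at *
      rw [inner_add_left, real_inner_smul_left, real_inner_smul_left]
      rcases eq_or_lt_of_le ha with h | h
      · have : b = 1 := by linarith
        subst this; rw [← h]; linarith
      · have := mul_pos h hf
        have := mul_nonneg hb hg.le
        linarith) (by
      intro u
      obtain ⟨v, hv⟩ := hsmall u u.2.1
      refine ⟨{u' | cnt X w v u' ≤ m}, ?_, fun u' => v - ⟪v, (u' : E d)⟫ • w, by fun_prop, ?_⟩
      · have := (continuous_subtype_val.tendsto u).eventually (cnt_usc X w v u)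
        filter_upwards [this] with u' h
        exact h.trans hv
      · intro u' hu'
        have h1 := hx u' (v - ⟪v, (u' : E d)⟫ • w) (by
          rw [inner_sub_left, real_inner_smul_left, u'.2.1]; ring)
        by_contra hneg
        simp only [Set.mem_ofPred_eq, not_lt] at hneg
        have h2 : ({i : Fin n | ⟪v - ⟪v, (u' : E d)⟫ • w, X i⟫ ≤ ⟪v - ⟪v, (u' : E d)⟫ • w, x u'⟫} : Set (Fin n)).ncard
            ≤ cnt X w v u' := by
          refine Set.ncard_le_ncard (fun i hi => ?_) (Set.toFinite _)
          simp only [Set.mem_ofPred_eq] at hi ⊢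
          have := hi.trans hneg
          rw [inner_sub_left, real_inner_smul_left] at this
          linarith
        have hu' : cnt X w v u' ≤ m := hu'
        omega)
  obtain ⟨u, hu⟩ := variational (CS X w m) hne hcomp (CS_convex X w hw m) φ
  set S := ∑ i, ⟪w, X i⟫ with hS
  have hSi : ∀ i, ⟪w, X i⟫ ≤ S := fun i =>
    Finset.single_le_sum (f := fun i => ⟪w, X i⟫) (fun j _ => (hw j).le) (Finset.mem_univ i)
  have hSpos : 0 < S := (hw ⟨0, hn⟩).trans_le (hSi _)
  have hin : (u : E d) + S⁻¹ • x u ∈ CS X w m := by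
    refine ⟨by rw [inner_add_right, inner_smul_right, u.2.1, hxw]; ring, fun v => ?_⟩
    have e : ⟪v, (u : E d) + S⁻¹ • x u⟫ = ⟪v, (u : E d)⟫ + S⁻¹ * ⟪v, x u⟫ := by
      rw [inner_add_right, inner_smul_right]
    rcases le_or_gt 0 ⟪v, x u⟫ with hs | hs
    · refine (u.2.2 v).trans (cnt_mono X w v _ _ hw ?_)
      rw [e]
      have : 0 ≤ S⁻¹ * ⟪v, x u⟫ := by positivity
      linarith
    · have h1 := hx u (v - ⟪v, (u : E d)⟫ • w) (by
          rw [inner_sub_left, real_inner_smul_left, u.2.1]; ring)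
      refine h1.le.trans (Set.ncard_le_ncard (fun i hi => ?_) (Set.toFinite _))
      simp only [Set.mem_ofPred_eq, inner_sub_left, real_inner_smul_left, hxw] at hi ⊢
      rw [e]
      have h2 : S⁻¹ * ⟪w, X i⟫ ≤ 1 := by
        rw [inv_mul_le_iff₀ hSpos]; linarith [hSi i]
      nlinarith
  have h1 := hu _ hin
  have h2 := hφ u
  simp only [Set.mem_ofPred_eq] at h2
  rw [add_sub_cancel_left, inner_smul_right] at h1
  have : 0 < S⁻¹ * ⟪φ u, x u⟫ := by positivity
  linarith

lemma exists_Au {d : ℕ} (hd : 2 ≤ d) (u : E d) (hu : u ≠ 0) :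
    ∃ A : Fin (d - 1) → E d, IsAu (‖u‖⁻¹ • u) A ∧ (∀ a, ⟪embed A a, u⟫ = 0) ∧
      ∀ v, ⟪v, u⟫ = 0 → ∃ a, v = embed A a := by
  haveI : Fact (Module.finrank ℝ (E d) = (d - 1) + 1) := ⟨by simp; omega⟩
  let b := OrthonormalBasis.fromOrthogonalSpanSingleton (𝕜 := ℝ) (d - 1) hu
  let A : Fin (d - 1) → E d := fun j => (b j : E d)
  have hAu : ∀ j, ⟪A j, u⟫ = 0 := fun j => by
    rw [real_inner_comm]
    exact Submodule.mem_orthogonal_singleton_iff_inner_right.1 (b j).2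
  refine ⟨A, ⟨?_, ?_, ?_⟩, ?_, ?_⟩
  · rw [norm_smul, norm_inv, norm_norm, inv_mul_cancel₀ (norm_ne_zero_iff.2 hu)]
  · exact b.orthonormal.comp_linearIsometry (Submodule.subtypeₗᵢ _)
  · intro j; rw [inner_smul_right, hAu, mul_zero]
  · intro a
    simp [embed, sum_inner, real_inner_smul_left, hAu]
  · intro v hv
    let v' : (Submodule.span ℝ {u})ᗮ := ⟨v, Submodule.mem_orthogonal_singleton_iff_inner_left.2 hv⟩
    refine ⟨b.repr v', ?_⟩
    have := congrArg (Subtype.val) (b.sum_repr v')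
    simp only [Submodule.coe_sum, Submodule.coe_smul] at this
    exact this.symm

lemma inner_proj {d : ℕ} (A : Fin (d - 1) → E d) (a : E (d - 1)) (x : E d) :
    ⟪a, proj A x⟫ = ⟪embed A a, x⟫ := by
  simp [proj, embed, sum_inner, real_inner_smul_left, PiLp.inner_apply, mul_comm, Finset.mul_sum, mul_left_comm]

lemma inner_embed {d : ℕ} (A : Fin (d - 1) → E d) (hA : Orthonormal ℝ A) (a x : E (d - 1)) :
    ⟪embed A a, embed A x⟫ = ⟪a, x⟫ := by
  simp only [embed]
  rw [hA.inner_sum]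
  simp [PiLp.inner_apply, mul_comm]

lemma depth_bdd {k n : ℕ} (Z : Fin n → E k) (x : E k) :
    BddBelow {r : ℝ | ∃ u : E k, ‖u‖ = 1 ∧ r = (sideCount Z u x : ℝ) / (n : ℝ)} :=
  ⟨0, by rintro r ⟨u, -, rfl⟩; positivity⟩

lemma depth_le {k n : ℕ} (Z : Fin n → E k) (x a : E k) (ha : ‖a‖ = 1) (m : ℕ)
    (h : sideCount Z a x ≤ m) : depth Z x ≤ (m : ℝ) / n := by
  refine (csInf_le (depth_bdd Z x) ⟨a, ha, rfl⟩).trans ?_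
  gcongr

lemma le_depth {k n : ℕ} (hk : 1 ≤ k) (Z : Fin n → E k) (x : E k) (m : ℕ)
    (h : ∀ a, m ≤ sideCount Z a x) : (m : ℝ) / n ≤ depth Z x := by
  refine le_csInf ?_ ?_
  · exact ⟨_, EuclideanSpace.single ⟨0, hk⟩ 1, by simp, rfl⟩
  · rintro r ⟨u, -, rfl⟩
    have := h u
    gcongr

lemma depth_eq_max {k n : ℕ} (Z : Fin n → E k) (y : E k) (r : ℝ) (h1 : r ≤ depth Z y)
    (h2 : ∀ x, depth Z x ≤ r) : depth Z y = maxDepth Z := by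
  refine le_antisymm (le_csSup ⟨r, ?_⟩ ⟨y, rfl⟩) (csSup_le ⟨_, y, rfl⟩ ?_)
  · rintro _ ⟨x, rfl⟩; exact h2 x
  · rintro _ ⟨x, rfl⟩; exact (h2 x).trans h1

lemma sideCount_le {k n : ℕ} (Z : Fin n → E k) (a x : E k) : sideCount Z a x ≤ n := by
  have := Set.ncard_le_card ({i : Fin n | ⟪a, Z i⟫ ≤ ⟪a, x⟫} : Set (Fin n))
  simpa [sideCount] using this

end Helpers

/-- **Lemma 5.** For every `y` outside the convex hull of the sample there is
a unit direction `u₀` such that the `A_{u₀}`-projection of `y` is a maximum-depth point of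
the projected sample: `D(A_{u₀}^T y, X_{u₀}^n) = λ*(X_{u₀}^n)`. -/
theorem lemma5 {d n : ℕ} (hd : 2 ≤ d) (X : Fin n → E d) (y : E d)
    (hy : y ∉ convexHull ℝ (Set.range X)) :
    ∃ (u₀ : E d) (A : Fin (d - 1) → E d), IsAu u₀ A ∧
      depth (fun i => proj A (X i)) (proj A y) = maxDepth (fun i => proj A (X i)) := by
  have hk : 1 ≤ d - 1 := by omega
  rcases Nat.eq_zero_or_pos n with hn | hn
  · subst hn
    have hu : (EuclideanSpace.single ⟨0, by omega⟩ 1 : E d) ≠ 0 := by simp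
    obtain ⟨A, hA, -, -⟩ := exists_Au hd _ hu
    refine ⟨_, A, hA, depth_eq_max _ _ ((0 : ℕ) / (0 : ℕ)) ?_ ?_⟩
    · exact le_depth hk _ _ 0 (fun _ => Nat.zero_le _)
    · intro x
      exact depth_le _ _ (EuclideanSpace.single ⟨0, hk⟩ 1) (by simp) 0 (sideCount_le _ _ _)
  obtain ⟨f, s, hf1, hf2⟩ := geometric_hahn_banach_point_closed (convex_convexHull ℝ (Set.range X))
    ((Set.finite_range X).isClosed_convexHull (𝕜 := ℝ)) hy
  let w : E d := (InnerProductSpace.toDual ℝ (E d)).symm f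
  have hwf : ∀ z, ⟪w, z⟫ = f z := fun z => InnerProductSpace.toDual_symm_apply
  obtain ⟨u, m, hwu, hm1, hm2⟩ := core (fun i => X i - y) w (by
    intro i
    rw [inner_sub_right, hwf, hwf]
    have := hf2 (X i) (subset_convexHull ℝ _ ⟨i, rfl⟩)
    linarith) hn
  have hu : u ≠ 0 := by rintro rfl; simp at hwu
  obtain ⟨A, hA, hA1, hA2⟩ := exists_Au hd u hu
  refine ⟨_, A, hA, depth_eq_max _ _ ((m : ℝ) / n) ?_ ?_⟩
  · refine le_depth hk _ _ m (fun a => ?_)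
    have := hm1 _ (hA1 a)
    simpa only [sideCount, inner_proj, inner_sub_right, sub_nonpos] using this
  · intro x
    obtain ⟨v, hv, hvm⟩ := hm2 (embed A x - y)
    obtain ⟨a, rfl⟩ := hA2 v hv
    have hcount : sideCount (fun i => proj A (X i)) a x ≤ m := by
      simpa only [sideCount, inner_proj, inner_sub_right, sub_le_sub_iff_right,
        inner_embed A hA.2.1] using hvm
    by_cases ha : a = 0
    · subst ha
      have hnm : n ≤ m := by
        have h1 : sideCount (fun i => proj A (X i)) 0 x = n := by
          simp [sideCount, Set.ncard_univ]
        omega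
      exact depth_le _ _ (EuclideanSpace.single ⟨0, hk⟩ 1) (by simp) m ((sideCount_le _ _ _).trans hnm)
    · have hpos : 0 < ‖a‖⁻¹ := inv_pos.2 (norm_pos_iff.2 ha)
      refine depth_le _ _ (‖a‖⁻¹ • a) ?_ m ?_
      · rw [norm_smul, norm_inv, norm_norm, inv_mul_cancel₀ (norm_ne_zero_iff.2 ha)]
      · have e : sideCount (fun i => proj A (X i)) (‖a‖⁻¹ • a) x = sideCount (fun i => proj A (X i)) a x := by
          simp only [sideCount, real_inner_smul_left, mul_le_mul_iff_right₀ hpos]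
        rw [e]; exact hcount
end
end

section
/- (Theorem 1) Suppose X^n ⊂ ℝ^d (d ≥ 2) is in general position. Then the finite sample additional breakdown point of Tukey's halfspace median T* is ε(T*, X^n) = λ_0 / (1 + λ_0), where λ_0 = inf over u ∈ S^{d−1} of λ*(X_u^n) is the infimum over all directions of the maximum Tukey depth of the projected sample X_u^n ⊂ ℝ^{d−1}. -/
open scoped RealInnerProductSpace
open MeasureTheory

noncomputable section

/-- Number of sample points in the closed halfspace `{z | ⟪a, x⟫ ≤ ⟪a, z⟫}`. -/
def hcnt {d n : ℕ} (Z : Fin n → E d) (a x : E d) : ℕ :=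
  (Finset.univ.filter (fun i => ⟪a, x⟫ ≤ ⟪a, Z i⟫)).card

lemma sideCount_eq_hcnt {d n : ℕ} (Z : Fin n → E d) (u x : E d) :
    sideCount Z u x = hcnt Z (-u) x := by
  unfold sideCount hcnt
  rw [← Set.ncard_coe_finset]
  congr 1
  ext i
  simp

lemma hcnt_smul {d n : ℕ} (Z : Fin n → E d) (a x : E d) {c : ℝ} (hc : 0 < c) :
    hcnt Z (c • a) x = hcnt Z a x := by
  unfold hcnt
  congr 1
  ext i
  simp [inner_smul_left, mul_le_mul_iff_right₀ hc]

lemma hcnt_le {d n : ℕ} (Z : Fin n → E d) (a x : E d) : hcnt Z a x ≤ n := by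
  unfold hcnt
  exact (Finset.card_le_univ _).trans (by simp)

lemma forall_unit_iff {d n : ℕ} (Z : Fin n → E d) (x : E d) (k : ℕ) :
    (∀ u : E d, ‖u‖ = 1 → k ≤ sideCount Z u x) ↔ ∀ a : E d, a ≠ 0 → k ≤ hcnt Z a x := by
  constructor
  · intro h a ha
    have hpos : 0 < ‖a‖⁻¹ := by positivity
    have := h (-(‖a‖⁻¹ • a)) (by rw [norm_neg, norm_smul, norm_inv, norm_norm]; field_simp)
    rwa [sideCount_eq_hcnt, neg_neg, hcnt_smul _ _ _ hpos] at this
  · intro h u hu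
    rw [sideCount_eq_hcnt]
    apply h
    intro h0
    rw [neg_eq_zero] at h0
    simp [h0] at hu

lemma exists_unit (d : ℕ) (hd : 1 ≤ d) : ∃ u : E d, ‖u‖ = 1 := by
  have : Nonempty (Fin d) := ⟨⟨0, hd⟩⟩
  obtain ⟨u, hu⟩ := exists_norm_eq (E d) (zero_le_one (α := ℝ))
  exact ⟨u, hu⟩

lemma exists_cnt {d n : ℕ} (hd : 1 ≤ d) (hn : 1 ≤ n) (Z : Fin n → E d) (x : E d) :
    ∃ c : ℕ, c ≤ n ∧ depth Z x = (c : ℝ) / n ∧ (∀ a : E d, a ≠ 0 → c ≤ hcnt Z a x) ∧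
      ∃ a : E d, a ≠ 0 ∧ hcnt Z a x = c := by
  classical
  obtain ⟨u0, hu0⟩ := exists_unit d hd
  have hne : ∃ c, ∃ u : E d, ‖u‖ = 1 ∧ sideCount Z u x = c := ⟨_, u0, hu0, rfl⟩
  obtain ⟨u, hu, hc⟩ := Nat.find_spec hne
  have hmin : ∀ v : E d, ‖v‖ = 1 → Nat.find hne ≤ sideCount Z v x := fun v hv =>
    Nat.find_min' hne ⟨v, hv, rfl⟩
  refine ⟨Nat.find hne, ?_, ?_, (forall_unit_iff Z x _).1 hmin, -u, ?_, ?_⟩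
  · rw [← hc, sideCount_eq_hcnt]; exact hcnt_le _ _ _
  · apply le_antisymm
    · apply csInf_le
      · exact ⟨0, by rintro r ⟨v, hv, rfl⟩; positivity⟩
      · exact ⟨u, hu, by rw [hc]⟩
    · apply le_csInf
      · exact ⟨_, u, hu, rfl⟩
      · rintro r ⟨v, hv, rfl⟩
        gcongr
        exact hmin v hv
  · intro h0; rw [neg_eq_zero] at h0; simp [h0] at hu
  · rw [← sideCount_eq_hcnt]; exact hc

lemma maxDepth_spec {d n : ℕ} (hd : 1 ≤ d) (hn : 1 ≤ n) (Z : Fin n → E d) :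
    ∃ h : ℕ, 1 ≤ h ∧ h ≤ n ∧ maxDepth Z = (h : ℝ) / n ∧
      (∀ x, x ∈ MSet Z ↔ ∀ a : E d, a ≠ 0 → h ≤ hcnt Z a x) ∧ (MSet Z).Nonempty ∧
      ∀ x, ∃ a : E d, a ≠ 0 ∧ hcnt Z a x ≤ h := by
  classical
  choose c hcn hcd hca a ha hac using exists_cnt hd hn Z
  have hn0 : (0 : ℝ) < n := by exact_mod_cast hn
  obtain ⟨x0, hx0⟩ : ∃ x0, ∀ x, c x ≤ c x0 := by
    have hfin : (Set.range c).Finite := (Set.finite_Iic n).subset (by rintro _ ⟨x, rfl⟩; exact hcn x)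
    obtain ⟨m, ⟨x0, rfl⟩, hm⟩ := hfin.exists_maximal (Set.range_nonempty c)
    refine ⟨x0, fun x => ?_⟩
    by_contra hlt
    push Not at hlt
    exact absurd (hm ⟨x, rfl⟩ hlt.le) (by omega)
  have hmax : maxDepth Z = (c x0 : ℝ) / n := by
    have : IsGreatest (Set.range (depth Z)) ((c x0 : ℝ) / n) := by
      refine ⟨⟨x0, hcd x0⟩, ?_⟩
      rintro _ ⟨x, rfl⟩
      rw [hcd]
      gcongr
      exact hx0 x
    exact this.csSup_eq
  refine ⟨c x0, ?_, hcn x0, hmax, ?_, ⟨x0, ?_⟩, fun x => ⟨a x, ha x, ?_⟩⟩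
  · refine le_trans ?_ (hx0 (Z ⟨0, hn⟩))
    rw [← hac]
    unfold hcnt
    rw [Nat.succ_le_iff, Finset.card_pos]
    exact ⟨⟨0, hn⟩, by simp⟩
  · intro x
    unfold MSet
    rw [Set.mem_setOf_eq, hmax, hcd]
    constructor
    · intro h
      have : c x = c x0 := by
        have := (div_left_inj' hn0.ne').1 h
        exact_mod_cast this
      rw [← this]; exact hca x
    · intro h
      have h1 := h (a x) (ha x)
      rw [hac] at h1
      rw [le_antisymm (hx0 x) h1]
  · show depth Z x0 = maxDepth Z
    rw [hmax, hcd]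
  · rw [hac]; exact hx0 x

/-- Evaluation of an affine function `(a, c)` at `y`: `⟪a, y⟫ + c`. -/
def ev {d : ℕ} (a : E d × ℝ) (y : E d) : ℝ := ⟪a.1, y⟫ + a.2

lemma ev_add {d : ℕ} (a b : E d × ℝ) (y : E d) : ev (a + b) y = ev a y + ev b y := by
  simp only [ev, Prod.fst_add, Prod.snd_add, inner_add_left]; ring

lemma ev_sub {d : ℕ} (a b : E d × ℝ) (y : E d) : ev (a - b) y = ev a y - ev b y := by
  simp only [ev, Prod.fst_sub, Prod.snd_sub, inner_sub_left]; ring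

lemma ev_smul {d : ℕ} (c : ℝ) (a : E d × ℝ) (y : E d) : ev (c • a) y = c * ev a y := by
  simp only [ev, Prod.smul_fst, Prod.smul_snd, inner_smul_left, smul_eq_mul]; simp; ring

lemma ev_zero {d : ℕ} (y : E d) : ev (0 : E d × ℝ) y = 0 := by simp [ev]

lemma ev_const {d : ℕ} (c : ℝ) (y : E d) : ev ((0 : E d), c) y = c := by simp [ev]

/-- `ev · y` as a linear functional. -/
def evL {d : ℕ} (y : E d) : (E d × ℝ) →ₗ[ℝ] ℝ where
  toFun a := ev a y
  map_add' a b := ev_add a b y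
  map_smul' c a := ev_smul c a y

lemma evL_apply {d : ℕ} (y : E d) (a : E d × ℝ) : evL y a = ev a y := rfl

lemma ev_sum {d : ℕ} {ι : Type*} (s : Finset ι) (f : ι → E d × ℝ) (y : E d) :
    ev (∑ j ∈ s, f j) y = ∑ j ∈ s, ev (f j) y := by
  simp only [← evL_apply, map_sum]

lemma ev_neg {d : ℕ} (a : E d × ℝ) (y : E d) : ev (-a) y = - ev a y := by
  simp only [← evL_apply, map_neg]

lemma continuous_ev {d : ℕ} (a : E d × ℝ) : Continuous (ev a) := by
  unfold ev; fun_prop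

/-- `ev a` as an affine map: halfspaces are convex. -/
lemma convex_ev_le {d : ℕ} (a : E d × ℝ) (c : ℝ) : Convex ℝ {y | ev a y ≤ c} := by
  have : {y | ev a y ≤ c} = {y | (innerₗ (E d) a.1) y ≤ c - a.2} := by
    ext y; simp only [ev, Set.mem_setOf_eq, innerₗ_apply_apply]; constructor <;> intro h <;> linarith
  rw [this]
  exact convex_halfSpace_le (LinearMap.isLinear _) _

lemma ev_le_of_mem_hull {d : ℕ} {S : Set (E d)} {a : E d × ℝ} {c : ℝ} (h : ∀ y ∈ S, ev a y ≤ c)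
    {y : E d} (hy : y ∈ convexHull ℝ S) : ev a y ≤ c :=
  convexHull_min (t := {y | ev a y ≤ c}) h (convex_ev_le a c) hy

lemma hcnt_eq_ev {d n : ℕ} (Z : Fin n → E d) (a : E d × ℝ) (x : E d) :
    hcnt Z a.1 x = (Finset.univ.filter (fun i => ev a x ≤ ev a (Z i))).card := by
  unfold hcnt ev
  simp

lemma exists_sep {d : ℕ} {ι : Type*} [Fintype ι] (C : ι → Set (E d))
    (hne : ∀ j, (C j).Nonempty) (hcomp : ∀ j, IsCompact (C j)) (hconv : ∀ j, Convex ℝ (C j))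
    (hemp : ⋂ j, C j = ∅) :
    ∃ (f : ι → E d × ℝ) (η : ℝ), 0 < η ∧ (∀ j, ∀ y ∈ C j, ev (f j) y ≤ 0) ∧
      ∑ j, f j = ((0 : E d), η) := by
  classical
  let dg : E d →ₗ[ℝ] (ι → E d) := LinearMap.pi (fun _ => LinearMap.id)
  have hdg : ∀ w j, dg w j = w := fun w j => rfl
  have hdisj : Disjoint (Set.pi Set.univ C) (LinearMap.range dg : Set (ι → E d)) := by
    rw [Set.disjoint_left]
    rintro c hc ⟨w, rfl⟩
    have : w ∈ ⋂ j, C j := Set.mem_iInter.2 fun j => hc j trivial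
    rw [hemp] at this
    exact this
  obtain ⟨F, u, v, h1, h2, h3⟩ := geometric_hahn_banach_compact_closed
    (convex_pi fun j _ => hconv j) (isCompact_univ_pi hcomp)
    (LinearMap.range dg).convex (Submodule.closed_of_finiteDimensional _) hdisj
  have hv : v < 0 := by
    have := h3 0 (Submodule.zero_mem _)
    simpa using this
  have hdg0 : ∀ w, F (dg w) = 0 := by
    intro w
    by_contra hw
    have := h3 (dg ((v / F (dg w)) • w)) ⟨_, rfl⟩
    rw [map_smul, map_smul, smul_eq_mul, div_mul_cancel₀ _ hw] at this
    exact lt_irrefl _ this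
  let L : ι → StrongDual ℝ (E d) := fun j => F.comp (ContinuousLinearMap.single ℝ (fun _ => E d) j)
  let g : ι → E d := fun j => (InnerProductSpace.toDual ℝ (E d)).symm (L j)
  have hg : ∀ j y, ⟪g j, y⟫ = F (Pi.single j y) := by
    intro j y
    simp [g, L, InnerProductSpace.toDual_symm_apply]
  have hF : ∀ c : ι → E d, F c = ∑ j, ⟪g j, c j⟫ := by
    intro c
    conv_lhs => rw [← Finset.univ_sum_single c]
    rw [map_sum]
    simp [hg]
  have hgs : ∑ j, g j = 0 := by
    apply ext_inner_right ℝ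
    intro w
    rw [sum_inner, inner_zero_left, ← hdg0 w, hF]
    rfl
  have hmax : ∀ j, ∃ c ∈ C j, ∀ y ∈ C j, ⟪g j, y⟫ ≤ ⟪g j, c⟫ := by
    intro j
    obtain ⟨c, hc, hm⟩ := (hcomp j).exists_isMaxOn (hne j)
      (f := fun y => ⟪g j, y⟫) (by fun_prop)
    exact ⟨c, hc, fun y hy => hm hy⟩
  choose c hc hm using hmax
  refine ⟨fun j => (g j, -⟪g j, c j⟫), -∑ j, ⟪g j, c j⟫, ?_, ?_, ?_⟩
  · have := h1 c (fun j _ => hc j)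
    rw [hF] at this
    linarith
  · intro j y hy
    have := hm j y hy
    simp only [ev]; linarith
  · ext1
    · simp [Prod.fst_sum, hgs]
    · simp [Prod.snd_sum]

/-- existence of a matrix `A` completing the unit vector `u`. -/
lemma exists_IsAu {d : ℕ} (hd : 1 ≤ d) (u : E d) (hu : ‖u‖ = 1) :
    ∃ A : Fin (d - 1) → E d, IsAu u A := by
  have hu0 : u ≠ 0 := by intro h; simp [h] at hu
  have hfr : Module.finrank ℝ (ℝ ∙ u)ᗮ = d - 1 := by
    have : Fact (Module.finrank ℝ (E d) = (d - 1) + 1) := ⟨by simp; omega⟩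
    exact Submodule.finrank_orthogonal_span_singleton hu0
  let b := (stdOrthonormalBasis ℝ (ℝ ∙ u)ᗮ).reindex (finCongr hfr)
  refine ⟨fun j => (b j : E d), hu, ?_, ?_⟩
  · exact b.orthonormal.comp_linearIsometry (Submodule.subtypeₗᵢ _)
  · intro j
    have := (b j).2
    rw [Submodule.mem_orthogonal_singleton_iff_inner_left] at this
    exact this

lemma inner_embed_s13 {d : ℕ} (A : Fin (d - 1) → E d) (w : E d) (z : E (d - 1)) :
    ⟪w, embed A z⟫ = ⟪proj A w, z⟫ := by
  simp only [embed, inner_sum, inner_smul_right, proj]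
  rw [PiLp.inner_apply]
  apply Finset.sum_congr rfl
  intro j _
  rw [real_inner_comm (A j) w]
  simp

lemma embed_proj_of_orth {d : ℕ} (hd : 1 ≤ d) {u : E d} {A : Fin (d - 1) → E d} (h : IsAu u A)
    (w : E d) (hw : ⟪w, u⟫ = 0) : embed A (proj A w) = w := by
  obtain ⟨hu, hA, hAu⟩ := h
  have hu0 : u ≠ 0 := by intro h; simp [h] at hu
  have hsub : Submodule.span ℝ (Set.range A) ≤ (ℝ ∙ u)ᗮ := by
    rw [Submodule.span_le]
    rintro _ ⟨j, rfl⟩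
    exact Submodule.mem_orthogonal_singleton_iff_inner_left.2 (hAu j)
  have hfr : Module.finrank ℝ (ℝ ∙ u)ᗮ = d - 1 := by
    have : Fact (Module.finrank ℝ (E d) = (d - 1) + 1) := ⟨by simp; omega⟩
    exact Submodule.finrank_orthogonal_span_singleton hu0
  have heq : Submodule.span ℝ (Set.range A) = (ℝ ∙ u)ᗮ := by
    apply Submodule.eq_of_le_of_finrank_eq hsub
    rw [hfr, finrank_span_eq_card hA.linearIndependent]
    simp
  have hwm : w ∈ Submodule.span ℝ (Set.range A) := by
    rw [heq]; exact Submodule.mem_orthogonal_singleton_iff_inner_left.2 hw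
  obtain ⟨c, rfl⟩ := (Submodule.mem_span_range_iff_exists_fun ℝ).1 hwm
  simp only [embed, proj]
  apply Finset.sum_congr rfl
  intro j _
  congr 1
  simp [hA.inner_right_fintype]

lemma proj_embed {d : ℕ} {u : E d} {A : Fin (d - 1) → E d} (h : IsAu u A) (z : E (d - 1)) :
    proj A (embed A z) = z := by
  ext j
  simp [embed, proj, h.2.1.inner_right_fintype]

lemma inner_u_embed {d : ℕ} {u : E d} {A : Fin (d - 1) → E d} (h : IsAu u A) (z : E (d - 1)) :
    ⟪u, embed A z⟫ = 0 := by
  simp only [embed, inner_sum, inner_smul_right]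
  apply Finset.sum_eq_zero
  intro j _
  rw [real_inner_comm, h.2.2 j, mul_zero]

lemma inner_proj_of_orth {d : ℕ} (hd : 1 ≤ d) {u : E d} {A : Fin (d - 1) → E d} (h : IsAu u A)
    (w x : E d) (hw : ⟪w, u⟫ = 0) : ⟪proj A w, proj A x⟫ = ⟪w, x⟫ := by
  conv_rhs => rw [← embed_proj_of_orth hd h w hw]
  rw [real_inner_comm x, inner_embed_s13, real_inner_comm]

/-- `X` satisfies `λ*(X_u) ≥ k / n` for all directions `u`, in counting form. -/
def ProjDeep {d n : ℕ} (X : Fin n → E d) (k : ℕ) : Prop :=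
  ∀ (u : E d) (A : Fin (d - 1) → E d), IsAu u A → ∃ z : E (d - 1),
    ∀ a : E (d - 1), a ≠ 0 → k ≤ hcnt (fun i => proj A (X i)) a z

lemma core_false {d n k : ℕ} (hd : 1 ≤ d) (hkn : k ≤ n) (X : Fin n → E d)
    (hX : ProjDeep X k) {ι : Type*} [Fintype ι] (f : ι → E d × ℝ) (η : ℝ) (hη : 0 < η)
    (hsum : ∑ j, f j = ((0 : E d), η)) (u : E d) (hu : u ≠ 0) (hfu : ∀ j, ⟪(f j).1, u⟫ = 0)
    (hcard : ∀ j, (Finset.univ.filter (fun i => 0 < ev (f j) (X i))).card < k) : False := by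
  obtain ⟨A, hA⟩ := exists_IsAu hd (‖u‖⁻¹ • u)
    (by rw [norm_smul, norm_inv, norm_norm]; field_simp)
  obtain ⟨z, hz⟩ := hX _ A hA
  have hpos : ∃ j, 0 < ev (f j) (embed A z) := by
    by_contra hcon
    push Not at hcon
    have := ev_sum Finset.univ f (embed A z)
    rw [hsum, ev_const] at this
    have h2 := Finset.sum_nonpos (s := Finset.univ) (fun j _ => hcon j)
    linarith
  obtain ⟨j, hj⟩ := hpos
  have hfu' : ⟪(f j).1, ‖u‖⁻¹ • u⟫ = 0 := by rw [inner_smul_right, hfu, mul_zero]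
  have hle : ∀ i, ⟪proj A (f j).1, z⟫ ≤ ⟪proj A (f j).1, proj A (X i)⟫ → 0 < ev (f j) (X i) := by
    intro i hi
    rw [inner_proj_of_orth hd hA _ _ hfu', ← inner_embed_s13] at hi
    unfold ev at hj ⊢
    linarith
  by_cases h0 : proj A (f j).1 = 0
  · have hall : (Finset.univ.filter (fun i => 0 < ev (f j) (X i))) = Finset.univ := by
      apply Finset.filter_true_of_mem
      intro i _
      apply hle
      simp [h0]
    have := hcard j
    rw [hall, Finset.card_univ, Fintype.card_fin] at this
    omega
  · have h1 := hz _ h0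
    have h2 := hcard j
    have h3 : hcnt (fun i => proj A (X i)) (proj A (f j).1) z ≤
        (Finset.univ.filter (fun i => 0 < ev (f j) (X i))).card := by
      apply Finset.card_le_card
      intro i hi
      rw [Finset.mem_filter] at hi ⊢
      exact ⟨hi.1, hle i hi.2⟩
    omega

/-- at most `d` vectors summing to zero in `ℝ^d` have a common nonzero orthogonal vector. -/
lemma exists_orth {d : ℕ} {ι : Type*} [Fintype ι] (hd : 1 ≤ d) (hι : Fintype.card ι ≤ d)
    (g : ι → E d) (hs : ∑ j, g j = 0) : ∃ u : E d, u ≠ 0 ∧ ∀ j, ⟪g j, u⟫ = 0 := by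
  classical
  have hlt : Module.finrank ℝ (Submodule.span ℝ (Set.range g)) < d := by
    rcases isEmpty_or_nonempty ι with hemp | hne
    · rw [Set.range_eq_empty, Submodule.span_empty, finrank_bot]; omega
    · have hnli : ¬ LinearIndependent ℝ g := by
        rw [Fintype.not_linearIndependent_iff]
        exact ⟨fun _ => 1, by simpa using hs, hne.some, one_ne_zero⟩
      by_contra hcon
      push Not at hcon
      apply hnli
      rw [linearIndependent_iff_card_le_finrank_span]
      exact hι.trans hcon
  obtain ⟨u, hu, hu0⟩ : ∃ u ∈ (Submodule.span ℝ (Set.range g))ᗮ, u ≠ 0 := by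
    apply Submodule.exists_mem_ne_zero_of_ne_bot
    intro hbot
    rw [Submodule.orthogonal_eq_bot_iff] at hbot
    rw [hbot] at hlt
    simp at hlt
  refine ⟨u, hu0, fun j => ?_⟩
  exact (Submodule.mem_orthogonal _ _).1 hu _ (Submodule.subset_span ⟨j, rfl⟩)

lemma inter_hull_nonempty {d n k : ℕ} (hd : 1 ≤ d) (hkn : k ≤ n) (X : Fin n → E d)
    (hX : ProjDeep X k) {ι : Type*} [Fintype ι] (hι : Fintype.card ι ≤ d)
    (T : ι → Finset (Fin n)) (hT : ∀ j, ((T j)ᶜ).card < k) :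
    ∃ y : E d, ∀ j, y ∈ convexHull ℝ (X '' (T j)) := by
  classical
  by_contra hcon
  have hemp : ⋂ j, convexHull ℝ (X '' (T j : Set (Fin n))) = ∅ := by
    rw [Set.eq_empty_iff_forall_notMem]
    intro y hy
    exact hcon ⟨y, fun j => Set.mem_iInter.1 hy j⟩
  obtain ⟨f, η, hη, hf, hsum⟩ := exists_sep _ (fun j => by
      rw [convexHull_nonempty_iff, Set.image_nonempty, Finset.coe_nonempty, ← Finset.card_pos]
      have := hT j
      rw [Finset.card_compl, Fintype.card_fin] at this
      omega)
    (fun j => Set.Finite.isCompact_convexHull (𝕜 := ℝ) ((T j).finite_toSet.image X))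
    (fun j => convex_convexHull ℝ _) hemp
  obtain ⟨u, hu, hfu⟩ := exists_orth hd hι (fun j => (f j).1)
    (by have := congrArg Prod.fst hsum; simpa [Prod.fst_sum] using this)
  apply core_false hd hkn X hX f η hη hsum u hu hfu
  intro j
  refine lt_of_le_of_lt (Finset.card_le_card ?_) (hT j)
  intro i hi
  rw [Finset.mem_filter] at hi
  rw [Finset.mem_compl]
  intro hiT
  have := hf j (X i) (subset_convexHull ℝ _ ⟨i, hiT, rfl⟩)
  linarith [hi.2]

lemma exists_cover {d N h : ℕ} (Z : Fin N → E d)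
    (hZ : ∀ x, ∃ a : E d, a ≠ 0 ∧ hcnt Z a x ≤ h) :
    ∃ (f : Fin (d + 1) → E d × ℝ) (η : ℝ) (T : Fin (d + 1) → Finset (Fin N)), 0 < η ∧
      ∑ j, f j = ((0 : E d), η) ∧ (∀ j, ((T j)ᶜ).card ≤ h) ∧
      ∀ j, ∀ i ∈ T j, ev (f j) (Z i) ≤ 0 := by
  classical
  rcases le_or_gt N h with hNh | hhN
  · refine ⟨fun _ => (0, 1), d + 1, fun _ => ∅, by positivity, ?_, ?_, by simp⟩
    · ext1
      · simp
      · simp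
    · simpa using hNh
  let s : Finset (Finset (Fin N)) := Finset.univ.filter (fun T => Tᶜ.card ≤ h)
  have hall : ¬ (⋂ T ∈ s, convexHull ℝ (Z '' (T : Set (Fin N)))).Nonempty := by
    rintro ⟨x, hx⟩
    obtain ⟨a, ha, hc⟩ := hZ x
    let T : Finset (Fin N) := Finset.univ.filter (fun i => ⟪a, Z i⟫ < ⟪a, x⟫)
    have hT : T ∈ s := by
      simp only [s, T, Finset.mem_filter, Finset.mem_univ, true_and]
      refine le_trans (le_of_eq ?_) hc
      unfold hcnt
      congr 1
      ext i
      simp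
    have hxT : x ∈ convexHull ℝ (Z '' (T : Set (Fin N))) := by
      have := Set.mem_iInter₂.1 hx T hT
      exact this
    have hsub : convexHull ℝ (Z '' (T : Set (Fin N))) ⊆ {y | (innerₗ (E d) a) y < ⟪a, x⟫} := by
      apply convexHull_min
      · rintro _ ⟨i, hi, rfl⟩
        have hi' : i ∈ T := hi
        simp only [T, Finset.mem_filter] at hi'
        exact hi'.2
      · exact convex_halfSpace_lt (LinearMap.isLinear _) _
    have := hsub hxT
    exact lt_irrefl _ (show ⟪a, x⟫ < ⟪a, x⟫ from this)
  obtain ⟨I, hIs, hI, hIe⟩ : ∃ I ⊆ s, I.card ≤ d + 1 ∧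
      ¬ (⋂ T ∈ I, convexHull ℝ (Z '' (T : Set (Fin N)))).Nonempty := by
    by_contra hcon
    push Not at hcon
    apply hall
    apply Convex.helly_theorem' (𝕜 := ℝ)
    · intro T _; exact convex_convexHull ℝ _
    · intro I hIs hI
      apply hcon I hIs
      simpa using hI
  have hIne : I.Nonempty := by
    by_contra hcon
    rw [Finset.not_nonempty_iff_eq_empty] at hcon
    apply hIe
    simp [hcon]
  obtain ⟨T, hT⟩ : ∃ T : Fin (d + 1) → I, Function.Surjective T := by
    have : Nonempty I := hIne.to_subtype
    obtain ⟨g⟩ : Nonempty (I ↪ Fin (d + 1)) := by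
      rw [Function.Embedding.nonempty_iff_card_le]
      simpa using hI
    exact ⟨Function.invFun g, Function.invFun_surjective g.injective⟩
  have hcard : ∀ j, ((T j : Finset (Fin N))ᶜ).card ≤ h := by
    intro j
    have := hIs (T j).2
    simp only [s, Finset.mem_filter] at this
    exact this.2
  obtain ⟨f, η, hη, hf, hsum⟩ := exists_sep
    (fun j => convexHull ℝ (Z '' ((T j : Finset (Fin N)) : Set (Fin N))))
    (fun j => by
      rw [convexHull_nonempty_iff, Set.image_nonempty, Finset.coe_nonempty, ← Finset.card_pos]
      have := hcard j
      rw [Finset.card_compl, Fintype.card_fin] at this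
      omega)
    (fun j => Set.Finite.isCompact_convexHull (𝕜 := ℝ) ((Finset.finite_toSet _).image Z))
    (fun j => convex_convexHull ℝ _) (by
      rw [Set.eq_empty_iff_forall_notMem]
      intro y hy
      apply hIe
      refine ⟨y, Set.mem_iInter₂.2 fun S hS => ?_⟩
      obtain ⟨j, hj⟩ := hT ⟨S, hS⟩
      have := Set.mem_iInter.1 hy j
      rwa [hj] at this)
  exact ⟨f, η, fun j => T j, hη, hsum, hcard, fun j i hi =>
    hf j _ (subset_convexHull ℝ _ ⟨i, hi, rfl⟩)⟩

/-- Hoffman-type lemma for polyhedral cones. -/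
lemma hoffman {W : Type*} [NormedAddCommGroup W] [NormedSpace ℝ W] [FiniteDimensional ℝ W]
    {U : Type*} [NormedAddCommGroup U] [NormedSpace ℝ U]
    {I : Type*} [Finite I] (l : I → StrongDual ℝ W) (Φ : W →L[ℝ] U) :
    ∃ κ : ℝ, 0 < κ ∧ ∀ h : W, (∀ i, l i h ≤ 0) →
      ∃ z : W, (∀ i, l i z ≤ 0) ∧ Φ z = 0 ∧ ‖h - z‖ ≤ κ * ‖Φ h‖ := by
  classical
  let K : Set W := {z | (∀ i, l i z ≤ 0) ∧ Φ z = 0}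
  have hKc : IsClosed K := by
    have : K = (⋂ i, {z | l i z ≤ 0}) ∩ {z | Φ z = 0} := by ext z; simp [K]
    rw [this]
    exact (isClosed_iInter fun i => isClosed_le (l i).continuous continuous_const).inter
      (isClosed_eq Φ.continuous continuous_const)
  have hK0 : K.Nonempty := ⟨0, by simp [K]⟩
  by_contra hcon
  push Not at hcon
  -- sequence of counterexamples
  have hseq : ∀ m : ℕ, ∃ h z : W, (∀ i, l i h ≤ 0) ∧ z ∈ K ∧ (∀ z' ∈ K, ‖h - z‖ ≤ ‖h - z'‖) ∧
      (m + 1 : ℝ) * ‖Φ h‖ < ‖h - z‖ := by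
    intro m
    obtain ⟨h, hh, hbad⟩ := hcon (m + 1) (by positivity)
    obtain ⟨z, hz, hmin⟩ := hKc.exists_infDist_eq_dist hK0 h
    refine ⟨h, z, hh, hz, ?_, hbad z hz.1 hz.2⟩
    intro z' hz'
    rw [← dist_eq_norm, ← dist_eq_norm, ← hmin]
    exact Metric.infDist_le_dist_of_mem hz'
  choose h z hh hz hmin hlt using hseq
  have hD : ∀ m, 0 < ‖h m - z m‖ := fun m => lt_of_le_of_lt (by positivity) (hlt m)
  let w : ℕ → W := fun m => (‖h m - z m‖)⁻¹ • (h m - z m)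
  have hw1 : ∀ m, ‖w m‖ = 1 := fun m => by
    have := hD m
    simp only [w, norm_smul, norm_inv, norm_norm]; field_simp
  -- active set pigeonhole
  let act : ℕ → Set I := fun m => {i | l i (z m) = 0}
  obtain ⟨S, hS⟩ : ∃ S : Set I, {m | act m = S}.Infinite := by
    by_contra hc
    push Not at hc
    have hun : (⋃ S : Set I, {m | act m = S}) = Set.univ := by
      ext m; simp
    have := Set.finite_iUnion hc
    rw [hun] at this
    exact Set.infinite_univ this
  let e := Nat.nth (fun m => act m = S)
  have he : StrictMono e := Nat.nth_strictMono hS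
  have heS : ∀ p, act (e p) = S := fun p => Nat.nth_mem_of_infinite hS p
  obtain ⟨u, hu, φ, hφ, hlim⟩ := (isCompact_sphere (0 : W) 1).tendsto_subseq
    (x := fun p => w (e p)) (fun p => by simp [hw1])
  -- Φ u = 0
  have hΦw : ∀ m, ‖Φ (w m)‖ ≤ 1 / ((m : ℝ) + 1) := by
    intro m
    have h1 : Φ (w m) = (‖h m - z m‖)⁻¹ • Φ (h m) := by
      simp only [w, map_smul, map_sub, (hz m).2, sub_zero]
    rw [h1, norm_smul, norm_inv, norm_norm, le_div_iff₀ (by positivity)]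
    have := hlt m
    have hDm := hD m
    rw [inv_mul_eq_div, div_mul_eq_mul_div, div_le_one hDm]
    linarith
  have hψ : StrictMono (e ∘ φ) := he.comp hφ
  have hΦu : Φ u = 0 := by
    have h1 : Filter.Tendsto (fun p => Φ (w (e (φ p)))) Filter.atTop (nhds (Φ u)) :=
      (Φ.continuous.tendsto u).comp hlim
    have h2 : Filter.Tendsto (fun p => Φ (w (e (φ p)))) Filter.atTop (nhds 0) := by
      apply squeeze_zero_norm (fun p => hΦw (e (φ p)))
      exact (tendsto_one_div_add_atTop_nhds_zero_nat (𝕜 := ℝ)).comp hψ.tendsto_atTop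
    exact tendsto_nhds_unique h1 h2
  -- on the active set l u ≤ 0
  have hlu : ∀ i ∈ S, l i u ≤ 0 := by
    intro i hi
    have h1 : Filter.Tendsto (fun p => l i (w (e (φ p)))) Filter.atTop (nhds (l i u)) :=
      ((l i).continuous.tendsto u).comp hlim
    refine le_of_tendsto' h1 fun p => ?_
    have hact : l i (z (e (φ p))) = 0 := by
      have : i ∈ act (e (φ p)) := by rw [heS]; exact hi
      exact this
    simp only [w, map_smul, map_sub, hact, sub_zero, smul_eq_mul]
    exact mul_nonpos_of_nonneg_of_nonpos (by positivity) (hh _ i)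
  -- choose index with ‖w - u‖ < 1
  obtain ⟨p, hp⟩ : ∃ p, ‖w (e (φ p)) - u‖ < 1 := by
    have := (Metric.tendsto_atTop.1 hlim) 1 one_pos
    obtain ⟨N, hN⟩ := this
    exact ⟨N, by simpa [dist_eq_norm] using hN N le_rfl⟩
  set m := e (φ p) with hm
  have hSm : ∀ i, i ∉ S → l i (z m) < 0 := by
    intro i hi
    refine lt_of_le_of_ne ((hz m).1 i) fun h0 => hi ?_
    rw [← heS (φ p)]; exact h0
  -- choose ε
  have hε : ∀ᶠ ε : ℝ in nhdsWithin 0 (Set.Ioi 0),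
      0 < ε ∧ ε ≤ ‖h m - z m‖ ∧ ∀ i, i ∉ S → l i (z m) + ε * l i u ≤ 0 := by
    refine Filter.Eventually.and self_mem_nhdsWithin (Filter.Eventually.and ?_ ?_)
    · exact (Filter.Eventually.filter_mono nhdsWithin_le_nhds
        (eventually_le_nhds (hD m)))
    · rw [Filter.eventually_all]
      intro i
      by_cases hi : i ∈ S
      · simp [hi]
      · have hc : Continuous (fun ε : ℝ => l i (z m) + ε * l i u) := by fun_prop
        have h0 : (fun ε : ℝ => l i (z m) + ε * l i u) 0 < 0 := by simpa using hSm i hi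
        have := (hc.tendsto 0).eventually_lt_const h0
        exact (this.filter_mono nhdsWithin_le_nhds).mono fun ε hε _ => le_of_lt hε
  obtain ⟨ε, hε0, hεD, hεS⟩ := hε.exists
  have hzK : z m + ε • u ∈ K := by
    refine ⟨fun i => ?_, ?_⟩
    · simp only [map_add, map_smul, smul_eq_mul]
      by_cases hi : i ∈ S
      · have := (hz m).1 i
        have := mul_nonpos_of_nonneg_of_nonpos hε0.le (hlu i hi)
        linarith
      · exact hεS i hi
    · simp [map_add, map_smul, (hz m).2, hΦu]
  have h1 := hmin m _ hzK
  have h2 : h m - (z m + ε • u) = (‖h m - z m‖ - ε) • w m + ε • (w m - u) := by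
    have : ‖h m - z m‖ • w m = h m - z m := by
      simp only [w]; rw [smul_smul, mul_inv_cancel₀ (hD m).ne', one_smul]
    rw [sub_smul, this, smul_sub]; abel
  have h3 : ‖h m - (z m + ε • u)‖ ≤ (‖h m - z m‖ - ε) + ε * ‖w m - u‖ := by
    rw [h2]
    refine (norm_add_le _ _).trans ?_
    rw [norm_smul _ (w m), norm_smul _ (w m - u), hw1, mul_one, Real.norm_of_nonneg (sub_nonneg.2 hεD),
      Real.norm_of_nonneg hε0.le]
  nlinarith

lemma gp_interp {d n : ℕ} (hn : d + 1 ≤ n) (X : Fin n → E d) (hX : inGeneralPosition X)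
    (S : Finset (Fin n)) (hS : S.card ≤ d + 1) (t : Fin n → ℝ) :
    ∃ a : E d × ℝ, ∀ i ∈ S, ev a (X i) = t i := by
  classical
  obtain ⟨S', hSS', hS'⟩ := Finset.exists_superset_card_eq hS (by simpa using hn)
  let L : (E d × ℝ) →ₗ[ℝ] (S' → ℝ) := LinearMap.pi (fun i => evL (X i))
  have hinj : Function.Injective L := by
    rw [← LinearMap.ker_eq_bot, LinearMap.ker_eq_bot']
    intro a ha
    have hai : ∀ i ∈ S', ev a (X i) = 0 := fun i hi => congrFun ha ⟨i, hi⟩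
    have h1 : a.1 = 0 := by
      by_contra h1
      have h2 := hX a.1 h1 (-a.2)
      have h3 : (S' : Set (Fin n)) ⊆ {i : Fin n | ⟪a.1, X i⟫ = -a.2} := by
        intro i hi
        have := hai i hi
        simp only [ev] at this
        show ⟪a.1, X i⟫ = -a.2
        linarith
      have h4 := Set.ncard_le_ncard h3 (Set.toFinite _)
      rw [Set.ncard_coe_finset] at h4
      omega
    obtain ⟨i, hi⟩ : S'.Nonempty := by rw [← Finset.card_pos]; omega
    have h2 := hai i hi
    simp only [ev, h1, inner_zero_left, zero_add] at h2
    exact Prod.ext h1 h2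
  have hsurj : Function.Surjective L :=
    (LinearMap.injective_iff_surjective_of_finrank_eq_finrank (by simp [hS'])).1 hinj
  obtain ⟨a, ha⟩ := hsurj (fun i => t i)
  exact ⟨a, fun i hi => congrFun ha ⟨i, hSS' hi⟩⟩

lemma mem_hull_face {d n : ℕ} (X : Fin n → E d) (T : Finset (Fin n)) (f : E d × ℝ)
    (hf : ∀ i ∈ T, ev f (X i) ≤ 0) {y : E d} (hy : y ∈ convexHull ℝ (X '' (T : Set (Fin n))))
    (hfy : ev f y = 0) :
    y ∈ convexHull ℝ (X '' ((T.filter (fun i => ev f (X i) = 0) : Finset (Fin n)) :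
      Set (Fin n))) := by
  set T0 := T.filter (fun i => ev f (X i) = 0) with hT0
  have hsub : convexHull ℝ (X '' (T : Set (Fin n))) ⊆
      {y | ev f y ≤ 0 ∧ (ev f y = 0 → y ∈ convexHull ℝ (X '' (T0 : Set (Fin n))))} := by
    apply convexHull_min
    · rintro _ ⟨i, hi, rfl⟩
      refine ⟨hf i hi, fun h0 => subset_convexHull ℝ _ ⟨i, ?_, rfl⟩⟩
      rw [Finset.mem_coe, hT0, Finset.mem_filter]
      exact ⟨hi, h0⟩
    · rintro p ⟨hp, hp'⟩ q ⟨hq, hq'⟩ a b ha hb hab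
      have hev : ev f (a • p + b • q) = a * ev f p + b * ev f q := by
        simp only [ev, inner_add_right, inner_smul_right]
        linear_combination - (hab) * f.2
      refine ⟨?_, fun h0 => ?_⟩
      · rw [hev]
        have := mul_nonpos_of_nonneg_of_nonpos ha hp
        have := mul_nonpos_of_nonneg_of_nonpos hb hq
        linarith
      · rw [hev] at h0
        have h1 := mul_nonpos_of_nonneg_of_nonpos ha hp
        have h2 := mul_nonpos_of_nonneg_of_nonpos hb hq
        rcases eq_or_lt_of_le ha with ha0 | ha0
        · have hb1 : b = 1 := by linarith
          subst hb1
          rw [← ha0] at h0 ⊢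
          simp only [zero_smul, one_smul, zero_add] at *
          exact hq' (by linarith)
        rcases eq_or_lt_of_le hb with hb0 | hb0
        · have hb1 : a = 1 := by linarith
          subst hb1
          rw [← hb0] at h0 ⊢
          simp only [zero_smul, one_smul, add_zero] at *
          exact hp' (by linarith)
        have hp0 : ev f p = 0 := by
          have : a * ev f p = 0 := by linarith
          exact (mul_eq_zero.1 this).resolve_left ha0.ne'
        have hq0 : ev f q = 0 := by
          have : b * ev f q = 0 := by linarith
          exact (mul_eq_zero.1 this).resolve_left hb0.ne'
        exact convex_convexHull ℝ _ (hp' hp0) (hq' hq0) ha hb hab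
  exact (hsub hy).2 hfy

lemma ev_eq_of_mem_hull {d : ℕ} {S : Set (E d)} {a : E d × ℝ} {c : ℝ} (h : ∀ y ∈ S, ev a y = c)
    {y : E d} (hy : y ∈ convexHull ℝ S) : ev a y = c := by
  apply le_antisymm
  · exact ev_le_of_mem_hull (fun z hz => (h z hz).le) hy
  · have := ev_le_of_mem_hull (a := -a) (c := -c) (fun z hz => by rw [ev_neg, h z hz]) hy
    rw [ev_neg] at this
    linarith

lemma greedy {d n k : ℕ} (hd : 1 ≤ d) (hkn : k ≤ n) (hdn : d + 1 ≤ n) (X : Fin n → E d)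
    (hgp : inGeneralPosition X) (hX : ProjDeep X k) {ι : Type*} [Fintype ι] [Nonempty ι]
    (hι : Fintype.card ι ≤ d) (T : ι → Finset (Fin n)) (hT : ∀ j, ((T j)ᶜ).card < k)
    (z : ι → E d × ℝ) (hz : ∀ j, ∀ i ∈ T j, ev (z j) (X i) ≤ 0) (hz0 : ∀ j, z j ≠ 0)
    (hzs : ∑ j, z j = 0)
    (hfr : Fintype.card ι - 1 ≤ Module.finrank ℝ (Submodule.span ℝ (Set.range z))) :
    ∑ j, (k - 1 - ((T j)ᶜ).card) ≤ 1 := by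
  classical
  by_contra hcon
  push Not at hcon
  set c := Fintype.card ι with hc
  have hc1 : 1 ≤ c := Fintype.card_pos
  let ρ : ι → ℕ := fun j => k - 1 - ((T j)ᶜ).card
  obtain ⟨js, hjs⟩ : ∃ j, 1 ≤ ρ j := by
    by_contra hno
    push Not at hno
    have : ∑ j, ρ j = 0 := Finset.sum_eq_zero fun j _ => by have := hno j; omega
    simp only [ρ] at this
    omega
  let ι' := ι ⊕ Fin (d - c)
  let π : ι' → ι := Sum.elim id (fun _ => js)
  have hι' : Fintype.card ι' ≤ d := by simp [ι', ← hc]; omega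
  have hcap : d - c + 2 ≤ ∑ a, ρ (π a) := by
    simp only [ι', Fintype.sum_sum_type, π, Sum.elim_inl, Sum.elim_inr, id]
    rw [Finset.sum_const, Finset.card_univ, Fintype.card_fin, smul_eq_mul]
    have h1 : d - c ≤ (d - c) * ρ js := Nat.le_mul_of_pos_right _ hjs
    have h2 : 2 ≤ ∑ j, ρ j := hcon
    omega
  -- common point
  have hpt : ∀ R : ι' → Finset (Fin n), (∀ a, R a ⊆ T (π a)) → (∀ a, (R a).card ≤ ρ (π a)) →
      ∃ y, (∀ j, ev (z j) y = 0) ∧ ∀ a, y ∈ convexHull ℝ (X ''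
        (((T (π a) \ R a).filter (fun i => ev (z (π a)) (X i) = 0) : Finset (Fin n)) :
          Set (Fin n))) := by
    intro R hR hRc
    obtain ⟨y, hy⟩ := inter_hull_nonempty hd hkn X hX hι' (fun a => T (π a) \ R a) (by
      intro a
      have h0 : (T (π a) \ R a)ᶜ ⊆ R a ∪ (T (π a))ᶜ := by
        intro i hi
        simp only [Finset.mem_compl, Finset.mem_sdiff, Finset.mem_union] at hi ⊢
        tauto
      have h0' := Finset.card_le_card h0
      have h1 := Finset.card_union_le (R a) (T (π a))ᶜ
      have h2 := hRc a
      have h3 := hT (π a)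
      simp only [ρ] at h2
      omega)
    have hle : ∀ a, ev (z (π a)) y ≤ 0 := fun a => by
      refine ev_le_of_mem_hull ?_ (hy a)
      rintro _ ⟨i, hi, rfl⟩
      exact hz _ i (Finset.mem_sdiff.1 hi).1
    have h0 : ∀ j, ev (z j) y = 0 := by
      have hs := ev_sum Finset.univ z y
      rw [hzs, ev_zero] at hs
      intro j
      exact (Finset.sum_eq_zero_iff_of_nonpos (fun j _ => hle (Sum.inl j))).1 hs.symm j
        (Finset.mem_univ _)
    refine ⟨y, h0, fun a => mem_hull_face X _ _ ?_ (hy a) (h0 _)⟩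
    intro i hi
    exact hz _ i (Finset.mem_sdiff.1 hi).1
  -- first parts nonzero
  have hz1 : ∀ j, (z j).1 ≠ 0 := by
    obtain ⟨y, hy, -⟩ := hpt (fun _ => ∅) (by simp) (by simp)
    intro j h1
    apply hz0 j
    have := hy j
    simp only [ev, h1, inner_zero_left, zero_add] at this
    exact Prod.ext h1 this
  let T0 : ι → Finset (Fin n) := fun j => (T j).filter (fun i => ev (z j) (X i) = 0)
  have hT0 : ∀ j, (T0 j).card ≤ d := by
    intro j
    have h1 := hgp (z j).1 (hz1 j) (-(z j).2)
    have h2 : (T0 j : Set (Fin n)) ⊆ {i : Fin n | ⟪(z j).1, X i⟫ = -(z j).2} := by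
      intro i hi
      have := (Finset.mem_filter.1 hi).2
      simp only [ev] at this
      show ⟪(z j).1, X i⟫ = -(z j).2
      linarith
    have h4 := Set.ncard_le_ncard h2 (Set.toFinite _)
    rw [Set.ncard_coe_finset] at h4
    omega
  have hlam : ∀ j, ∀ v : Fin n, ∃ a : E d × ℝ, ∀ i ∈ T0 j, ev a (X i) = if i = v then 1 else 0 :=
    fun j v => gp_interp hdn X hgp (T0 j) (by have := hT0 j; omega) _
  choose lam hlam using hlam
  let B : (ι' → Finset (Fin n)) → Set (E d × ℝ) := fun R =>
    Set.range z ∪ {w | ∃ a, ∃ v ∈ R a, w = lam (π a) v}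
  have hvan : ∀ R : ι' → Finset (Fin n), (∀ a, R a ⊆ T0 (π a)) → (∀ a, (R a).card ≤ ρ (π a)) →
      ∃ y, (Submodule.span ℝ (B R) ≤ LinearMap.ker (evL y)) ∧
        ∀ a, ∑ v ∈ T0 (π a), ev (lam (π a) v) y = 1 := by
    intro R hR hRc
    obtain ⟨y, hy0, hy⟩ := hpt R (fun a => (hR a).trans (Finset.filter_subset _ _)) hRc
    refine ⟨y, ?_, ?_⟩
    · rw [Submodule.span_le]
      rintro w (⟨j, rfl⟩ | ⟨a, v, hv, rfl⟩)
      · exact hy0 j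
      · show ev (lam (π a) v) y = 0
        refine ev_eq_of_mem_hull ?_ (hy a)
        rintro _ ⟨i, hi, rfl⟩
        have hi' := Finset.mem_filter.1 hi
        have hi2 := Finset.mem_sdiff.1 hi'.1
        rw [hlam (π a) v i (Finset.mem_filter.2 ⟨hi2.1, hi'.2⟩), if_neg]
        rintro rfl
        exact hi2.2 hv
    · intro a
      rw [← ev_sum]
      refine ev_eq_of_mem_hull ?_ (hy a)
      rintro _ ⟨i, hi, rfl⟩
      have hi' := Finset.mem_filter.1 hi
      have hi2 := Finset.mem_sdiff.1 hi'.1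
      have hi0 : i ∈ T0 (π a) := Finset.mem_filter.2 ⟨hi2.1, hi'.2⟩
      rw [ev_sum, Finset.sum_congr rfl (fun v _ => hlam (π a) v i hi0)]
      simp [hi0]
  have hind : ∀ s, s ≤ d - c + 2 → ∃ R : ι' → Finset (Fin n), (∀ a, R a ⊆ T0 (π a)) ∧
      (∀ a, (R a).card ≤ ρ (π a)) ∧ ∑ a, (R a).card = s ∧
      c - 1 + s ≤ Module.finrank ℝ (Submodule.span ℝ (B R)) := by
    intro s
    induction s with
    | zero =>
      intro _
      refine ⟨fun _ => ∅, by simp, by simp, by simp, ?_⟩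
      have hB : B (fun _ => ∅) = Set.range z := by
        ext w; simp [B]
      rw [hB]; simpa using hfr
    | succ s ih =>
      intro hs
      obtain ⟨R, hR, hRc, hRs, hRf⟩ := ih (by omega)
      obtain ⟨y, hy, hy1⟩ := hvan R hR hRc
      obtain ⟨a, -, ha⟩ : ∃ a ∈ Finset.univ, (R a).card < ρ (π a) :=
        Finset.exists_lt_of_sum_lt (by omega)
      obtain ⟨v, hv, hv0⟩ : ∃ v ∈ T0 (π a), ev (lam (π a) v) y ≠ 0 := by
        apply Finset.exists_ne_zero_of_sum_ne_zero
        rw [hy1 a]; exact one_ne_zero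
      have hvR : v ∉ R a := by
        intro hvR
        have : lam (π a) v ∈ Submodule.span ℝ (B R) :=
          Submodule.subset_span (Or.inr ⟨a, v, hvR, rfl⟩)
        exact hv0 (hy this)
      let R' := Function.update R a (insert v (R a))
      have hsub : ∀ b, R b ⊆ R' b := by
        intro b
        by_cases hb : b = a
        · subst hb; simp [R']
        · simp [R', hb]
      refine ⟨R', ?_, ?_, ?_, ?_⟩
      · intro b
        by_cases hb : b = a
        · subst hb; simp only [R', Function.update_self]
          exact Finset.insert_subset hv (hR b)
        · simpa [R', hb] using hR b
      · intro b
        by_cases hb : b = a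
        · subst hb; simp only [R', Function.update_self]
          rw [Finset.card_insert_of_notMem hvR]; omega
        · simpa [R', hb] using hRc b
      · rw [← hRs, ← Finset.add_sum_erase _ _ (Finset.mem_univ a),
          ← Finset.add_sum_erase Finset.univ (fun a => (R a).card) (Finset.mem_univ a)]
        have h1 : ∑ b ∈ Finset.univ.erase a, (R' b).card =
            ∑ b ∈ Finset.univ.erase a, (R b).card := by
          apply Finset.sum_congr rfl
          intro b hb
          simp [R', (Finset.mem_erase.1 hb).1]
        rw [h1]
        simp only [R', Function.update_self]
        rw [Finset.card_insert_of_notMem hvR]; omega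
      · have hlt : Submodule.span ℝ (B R) < Submodule.span ℝ (B R') := by
          refine lt_of_le_of_ne (Submodule.span_mono ?_) ?_
          · rintro w (hw | ⟨b, v', hv', rfl⟩)
            · exact Or.inl hw
            · exact Or.inr ⟨b, v', hsub b hv', rfl⟩
          · intro heq
            have : lam (π a) v ∈ Submodule.span ℝ (B R') :=
              Submodule.subset_span (Or.inr ⟨a, v, by simp [R'], rfl⟩)
            rw [← heq] at this
            exact hv0 (hy this)
        have := Submodule.finrank_lt_finrank_of_lt hlt
        omega
  obtain ⟨R, hR, hRc, hRs, hRf⟩ := hind _ le_rfl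
  obtain ⟨y, hy, -⟩ := hvan R hR hRc
  have htop : Submodule.span ℝ (B R) = ⊤ := by
    apply Submodule.eq_top_of_finrank_eq
    apply le_antisymm (Submodule.finrank_le _)
    have : Module.finrank ℝ (E d × ℝ) = d + 1 := by simp
    rw [this]; omega
  have h1 : ((0 : E d), (1 : ℝ)) ∈ Submodule.span ℝ (B R) := by rw [htop]; trivial
  have h2 : ev ((0 : E d), (1 : ℝ)) y = 0 := hy h1
  rw [ev_const] at h2
  exact one_ne_zero h2

/-- The configuration obtained from a covering by halfspaces. -/
structure Cfg {d n : ℕ} (X : Fin n → E d) (k : ℕ) (f : Fin (d + 1) → E d × ℝ) (η : ℝ)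
    (T : Fin (d + 1) → Finset (Fin n)) : Prop where
  hd : 1 ≤ d
  hkn : k ≤ n
  deep : ProjDeep X k
  pos : 0 < η
  sum : ∑ j, f j = ((0 : E d), η)
  card : ∀ j, ((T j)ᶜ).card < k
  le : ∀ j, ∀ i ∈ T j, ev (f j) (X i) ≤ 0

section
variable {d n k : ℕ} {X : Fin n → E d} {f : Fin (d + 1) → E d × ℝ} {η : ℝ}
  {T : Fin (d + 1) → Finset (Fin n)}

lemma Cfg.inter (H : Cfg X k f η T) (C : Finset (Fin (d + 1))) (hC : C.card ≤ d) :
    ∃ y : E d, ∀ j ∈ C, y ∈ convexHull ℝ (X '' (T j)) := by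
  obtain ⟨y, hy⟩ := inter_hull_nonempty H.hd H.hkn X H.deep (ι := C) (by simpa using hC)
    (fun j => T j) (fun j => H.card j)
  exact ⟨y, fun j hj => hy ⟨j, hj⟩⟩

lemma Cfg.le_hull (H : Cfg X k f η T) {j : Fin (d + 1)} {y : E d}
    (hy : y ∈ convexHull ℝ (X '' (T j))) : ev (f j) y ≤ 0 := by
  refine ev_le_of_mem_hull ?_ hy
  rintro _ ⟨i, hi, rfl⟩
  exact H.le j i hi

/-- points `y_j` -/
lemma Cfg.pt (H : Cfg X k f η T) (j : Fin (d + 1)) :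
    ∃ y : E d, y ∈ convexHull ℝ (Set.range X) ∧ ∀ i, i ≠ j → ev (f i) y ≤ 0 := by
  classical
  obtain ⟨y, hy⟩ := H.inter (Finset.univ.erase j) (by simp)
  have hd := H.hd
  have hy' : ∀ i, i ≠ j → y ∈ convexHull ℝ (X '' (T i)) := fun i hi => hy i (by simp [hi])
  refine ⟨y, ?_, fun i hi => H.le_hull (hy' i hi)⟩
  have : Nontrivial (Fin (d + 1)) := Fin.nontrivial_iff_two_le.2 (by omega)
  obtain ⟨i, hi⟩ := exists_ne j
  exact convexHull_mono (Set.image_subset_range _ _) (hy' i hi)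

lemma Cfg.sum_ev (H : Cfg X k f η T) (y : E d) : ∑ j, ev (f j) y = η := by
  rw [← ev_sum, H.sum, ev_const]

lemma Cfg.exists_pos (H : Cfg X k f η T) (j : Fin (d + 1)) : ∃ i, 0 < ev (f j) (X i) := by
  by_contra hcon
  push Not at hcon
  obtain ⟨y, hy, hyi⟩ := H.pt j
  have hj : ev (f j) y ≤ 0 := by
    refine ev_le_of_mem_hull ?_ hy
    rintro _ ⟨i, rfl⟩
    exact hcon i
  have h1 := H.sum_ev y
  have h2 : ∑ j, ev (f j) y ≤ 0 := Finset.sum_nonpos fun i _ => by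
    by_cases hij : i = j
    · rw [hij]; exact hj
    · exact hyi i hij
  linarith [H.pos]

/-- weighted lower bound at the points `y_j`. -/
lemma Cfg.weighted (H : Cfg X k f η T) (c : Fin (d + 1) → ℝ) (j : Fin (d + 1))
    (hj : ∀ i, c i ≤ c j) {y : E d} (hy : ∀ i, i ≠ j → ev (f i) y ≤ 0) :
    c j * η ≤ ∑ i, c i * ev (f i) y := by
  rw [← H.sum_ev y, Finset.mul_sum]
  apply Finset.sum_le_sum
  intro i _
  by_cases hij : i = j
  · rw [hij]
  · nlinarith [hj i, hy i hij]

lemma Cfg.linInd (H : Cfg X k f η T) : LinearIndependent ℝ f := by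
  classical
  rw [Fintype.linearIndependent_iff]
  by_contra hcon
  push Not at hcon
  obtain ⟨c0, hc0, i0, hi0⟩ := hcon
  obtain ⟨c, hc, i1, hi1⟩ : ∃ c : Fin (d + 1) → ℝ, ∑ i, c i • f i = 0 ∧ ∃ i, 0 < c i := by
    rcases lt_or_gt_of_ne hi0 with h | h
    · exact ⟨fun i => - c0 i, by simp [neg_smul, hc0], i0, by simpa using h⟩
    · exact ⟨c0, hc0, i0, h⟩
  obtain ⟨j, -, hj⟩ := Finset.exists_max_image Finset.univ c ⟨i0, Finset.mem_univ _⟩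
  have hcj : 0 < c j := lt_of_lt_of_le hi1 (hj i1 (Finset.mem_univ _))
  obtain ⟨y, -, hy⟩ := H.pt j
  have h1 := H.weighted c j (fun i => hj i (Finset.mem_univ _)) hy
  have h2 : ∑ i, c i * ev (f i) y = 0 := by
    have := congrArg (fun a => ev a y) hc
    simp only [ev_sum, ev_smul, ev_zero] at this
    exact this
  have := mul_pos hcj H.pos
  linarith

lemma norm_le_of_mem_hull {R : ℝ} (hR : ∀ i, ‖X i‖ ≤ R) {y : E d}
    (hy : y ∈ convexHull ℝ (Set.range X)) : ‖y‖ ≤ R := by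
  have : convexHull ℝ (Set.range X) ⊆ Metric.closedBall 0 R := by
    apply convexHull_min
    · rintro _ ⟨i, rfl⟩; simpa using hR i
    · exact convex_closedBall _ _
  simpa using this hy

/-- `θ` gives a function growing towards `x` at a definite rate. -/
def PP (f : Fin (d + 1) → E d × ℝ) (x : E d) (C : Finset (Fin (d + 1))) (K : ℝ) : Prop :=
  ∃ θ : Fin (d + 1) → ℝ, (∀ j, 0 ≤ θ j) ∧ (∀ j, j ∉ C → θ j = 0) ∧
    0 < ⟪(∑ j, θ j • f j).1, x⟫ ∧ ‖∑ j, θ j • f j‖ * ‖x‖ ≤ K * ⟪(∑ j, θ j • f j).1, x⟫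

lemma Cfg.start (H : Cfg X k f η T) {R : ℝ} (hR0 : 0 ≤ R) (hR : ∀ i, ‖X i‖ ≤ R) (x : E d)
    (hx : R < ‖x‖) : ∃ C : Finset (Fin (d + 1)), C.card = d ∧ PP f x C (R + 1) := by
  classical
  have hspan := H.linInd.span_eq_top_of_card_eq_finrank' (by simp)
  have hqm : ((x, -‖x‖ ^ 2) : E d × ℝ) ∈ Submodule.span ℝ (Set.range f) := by
    rw [hspan]; trivial
  obtain ⟨q, hq⟩ := (Submodule.mem_span_range_iff_exists_fun ℝ).1 hqm
  obtain ⟨j1, -, hj1⟩ := Finset.exists_max_image Finset.univ q ⟨0, Finset.mem_univ _⟩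
  obtain ⟨j0, -, hj0⟩ := Finset.exists_min_image Finset.univ q ⟨0, Finset.mem_univ _⟩
  obtain ⟨y1, hy1X, hy1⟩ := H.pt j1
  obtain ⟨y0, hy0X, hy0⟩ := H.pt j0
  have hy1R := norm_le_of_mem_hull hR hy1X
  have hy0R := norm_le_of_mem_hull hR hy0X
  have hx0 : 0 < ‖x‖ := lt_of_le_of_lt hR0 hx
  have hqneg : q j1 < 0 := by
    have h1 := H.weighted q j1 (fun i => hj1 i (Finset.mem_univ _)) hy1
    have h2 : ∑ i, q i * ev (f i) y1 = ⟪x, y1⟫ - ‖x‖ ^ 2 := by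
      have := congrArg (fun a => ev a y1) hq
      simp only [ev_sum, ev_smul] at this
      rw [this]; simp [ev]; ring
    have h3 : ⟪x, y1⟫ ≤ ‖x‖ * ‖y1‖ := real_inner_le_norm _ _
    have h4 : ‖x‖ * ‖y1‖ < ‖x‖ ^ 2 := by nlinarith
    have h5 : q j1 * η < 0 := by linarith
    by_contra hc
    push Not at hc
    have := mul_nonneg hc H.pos.le
    linarith
  have hqn : ∀ i, q i < 0 := fun i => lt_of_le_of_lt (hj1 i (Finset.mem_univ _)) hqneg
  have hq0 := hqn j0
  let θ : Fin (d + 1) → ℝ := fun i => 1 - q i / q j0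
  have hθ0 : ∀ i, 0 ≤ θ i := by
    intro i
    have : q i / q j0 ≤ 1 := by
      rw [div_le_one_of_neg hq0]; exact hj0 i (Finset.mem_univ _)
    simp only [θ]; linarith
  have hθj0 : θ j0 = 0 := by simp only [θ]; rw [div_self hq0.ne, sub_self]
  have hθj1 : ∀ i, θ i ≤ θ j1 := by
    intro i
    have : q j1 / q j0 ≤ q i / q j0 :=
      div_le_div_of_nonpos_of_le hq0.le (hj1 i (Finset.mem_univ _))
    simp only [θ]; linarith
  set s : ℝ := -1 / q j0 with hs
  have hs0 : 0 < s := div_pos_of_neg_of_neg (by norm_num) hq0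
  have hg : ∑ i, θ i • f i = (s • x, η - s * ‖x‖ ^ 2) := by
    have h1 : ∑ i, θ i • f i = ∑ i, f i + s • ∑ i, q i • f i := by
      rw [Finset.smul_sum, ← Finset.sum_add_distrib]
      apply Finset.sum_congr rfl
      intro i _
      have h2 : f i + s • q i • f i = (1 + s * q i) • f i := by
        rw [add_smul, one_smul, smul_smul]
      rw [h2]
      congr 1
      simp only [θ, hs]; ring
    rw [h1, H.sum, hq]
    ext1
    · simp
    · simp; ring
  refine ⟨Finset.univ.erase j0, by simp, θ, hθ0, ?_, ?_, ?_⟩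
  · intro j hj
    have : j = j0 := by simpa using hj
    rw [this, hθj0]
  · rw [hg]
    simp only [inner_smul_left, real_inner_self_eq_norm_sq]
    simp only [conj_trivial]
    positivity
  · have hevg : ∀ y, ∑ i, θ i * ev (f i) y = ⟪s • x, y⟫ + (η - s * ‖x‖ ^ 2) := by
      intro y
      have := congrArg (fun a => ev a y) hg
      simp only [ev_sum, ev_smul] at this
      rw [this]; simp [ev]
    have h1 : 0 ≤ ∑ i, θ i * ev (f i) y1 :=
      le_trans (mul_nonneg (hθ0 j1) H.pos.le) (H.weighted θ j1 hθj1 hy1)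
    have h0 : ∑ i, θ i * ev (f i) y0 ≤ 0 := Finset.sum_nonpos fun i _ => by
      by_cases hij : i = j0
      · rw [hij, hθj0, zero_mul]
      · exact mul_nonpos_of_nonneg_of_nonpos (hθ0 i) (hy0 i hij)
    rw [hevg] at h1 h0
    have hn : ‖s • x‖ = s * ‖x‖ := by rw [norm_smul, Real.norm_of_nonneg hs0.le]
    have a1 : ⟪s • x, y1⟫ ≤ s * ‖x‖ * R := by
      refine (real_inner_le_norm _ _).trans ?_
      rw [hn]; gcongr
    have a0 : -(s * ‖x‖ * R) ≤ ⟪s • x, y0⟫ := by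
      have := abs_le.1 (abs_real_inner_le_norm (s • x) y0)
      refine le_trans ?_ this.1
      rw [hn]
      have : s * ‖x‖ * ‖y0‖ ≤ s * ‖x‖ * R := by gcongr
      linarith
    have hnorm : ‖((s • x, η - s * ‖x‖ ^ 2) : E d × ℝ)‖ ≤ (R + 1) * (s * ‖x‖) := by
      rw [Prod.norm_def]
      apply max_le
      · show ‖s • x‖ ≤ _
        rw [hn]
        have : 0 ≤ s * ‖x‖ := by positivity
        nlinarith
      · show |η - s * ‖x‖ ^ 2| ≤ _
        have : 0 ≤ s * ‖x‖ := by positivity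
        rw [abs_le]
        constructor <;> nlinarith
    rw [hg]
    have hin : ⟪s • x, x⟫ = s * ‖x‖ * ‖x‖ := by
      rw [real_inner_smul_left, real_inner_self_eq_norm_sq]; ring
    show _ ≤ (R + 1) * ⟪s • x, x⟫
    rw [hin]
    calc _ ≤ (R + 1) * (s * ‖x‖) * ‖x‖ := by gcongr
      _ = _ := by ring

lemma PP.mono {x : E d} {C : Finset (Fin (d + 1))} {K K' : ℝ} (h : PP f x C K) (hK : K ≤ K') :
    PP f x C K' := by
  obtain ⟨θ, h1, h2, h3, h4⟩ := h
  refine ⟨θ, h1, h2, h3, h4.trans ?_⟩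
  gcongr

lemma PP_far {g : E d × ℝ} {x : E d} {K R : ℝ} (hK : 0 < K)
    (hR : ∀ i, ‖X i‖ ≤ R) (hpos : 0 < ⟪g.1, x⟫) (hle : ‖g‖ * ‖x‖ ≤ K * ⟪g.1, x⟫)
    (hx : K * (R + 1) < ‖x‖) (hR0 : 0 ≤ R) :
    0 < ev g x ∧ ∀ i, ev g (X i) < ev g x := by
  have hg1 : ‖g.1‖ ≤ ‖g‖ := norm_fst_le g
  have hg2 : |g.2| ≤ ‖g‖ := norm_snd_le g
  have hg0 : 0 < ‖g‖ := by
    refine lt_of_lt_of_le (norm_pos_iff.2 ?_) hg1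
    intro h0
    rw [h0, inner_zero_left] at hpos
    exact lt_irrefl _ hpos
  have hkey : ‖g‖ * (R + 1) < ⟪g.1, x⟫ := by
    have h1 : ‖g‖ * (K * (R + 1)) < ‖g‖ * ‖x‖ := by gcongr
    have h2 : K * (‖g‖ * (R + 1)) < K * ⟪g.1, x⟫ := by linarith
    exact lt_of_mul_lt_mul_left h2 hK.le
  have h2 := abs_le.1 hg2
  have hgR : 0 ≤ ‖g‖ * R := by positivity
  refine ⟨?_, fun i => ?_⟩
  · unfold ev; linarith
  · have h3 : ⟪g.1, X i⟫ ≤ ‖g‖ * R := by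
      refine (real_inner_le_norm _ _).trans ?_
      gcongr
      exact hR i
    unfold ev; linarith

end

/-- Uniform Hoffman constant. -/
lemma hoffman_unif {d n : ℕ} (X : Fin n → E d) :
    ∃ κ : ℝ, 1 ≤ κ ∧ ∀ (C : Finset (Fin (d + 1))) (T : Fin (d + 1) → Finset (Fin n))
      (h : Fin (d + 1) → E d × ℝ), (∀ j, j ∉ C → h j = 0) →
      (∀ j, ∀ i ∈ T j, ev (h j) (X i) ≤ 0) →
      ∃ z : Fin (d + 1) → E d × ℝ, (∀ j, j ∉ C → z j = 0) ∧
        (∀ j, ∀ i ∈ T j, ev (z j) (X i) ≤ 0) ∧ ∑ j, z j = 0 ∧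
        ∀ j, ‖h j - z j‖ ≤ κ * ‖∑ j, h j‖ := by
  classical
  have hone : ∀ p : Finset (Fin (d + 1)) × (Fin (d + 1) → Finset (Fin n)), ∃ κ : ℝ, 0 < κ ∧
      ∀ (h : Fin (d + 1) → E d × ℝ), (∀ j, j ∉ p.1 → h j = 0) →
      (∀ j, ∀ i ∈ p.2 j, ev (h j) (X i) ≤ 0) →
      ∃ z : Fin (d + 1) → E d × ℝ, (∀ j, j ∉ p.1 → z j = 0) ∧
        (∀ j, ∀ i ∈ p.2 j, ev (z j) (X i) ≤ 0) ∧ ∑ j, z j = 0 ∧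
        ∀ j, ‖h j - z j‖ ≤ κ * ‖∑ j, h j‖ := by
    rintro ⟨C, T⟩
    let Φ : (Fin (d + 1) → E d × ℝ) →L[ℝ] (E d × ℝ) × (Fin (d + 1) → E d × ℝ) :=
      (∑ j, ContinuousLinearMap.proj j).prod
        (ContinuousLinearMap.pi fun j => if j ∈ C then 0 else ContinuousLinearMap.proj j)
    have hΦ1 : ∀ h, (Φ h).1 = ∑ j, h j := by
      intro h; simp [Φ]
    have hΦ2 : ∀ h j, (Φ h).2 j = if j ∈ C then 0 else h j := by
      intro h j
      simp only [Φ, ContinuousLinearMap.prod_apply, ContinuousLinearMap.pi_apply]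
      split_ifs <;> simp
    let l : (Σ j : Fin (d + 1), {i // i ∈ T j}) → StrongDual ℝ (Fin (d + 1) → E d × ℝ) :=
      fun p => LinearMap.toContinuousLinearMap ((evL (X p.2)).comp (LinearMap.proj p.1))
    have hl : ∀ p h, l p h = ev (h p.1) (X p.2) := fun p h => rfl
    obtain ⟨κ, hκ, hh⟩ := hoffman l Φ
    refine ⟨κ, hκ, fun h h0 h1 => ?_⟩
    obtain ⟨z, hz1, hz2, hz3⟩ := hh h (fun p => by rw [hl]; exact h1 _ _ p.2.2)
    have hΦh : ‖Φ h‖ = ‖∑ j, h j‖ := by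
      have h2 : (Φ h).2 = 0 := by
        ext1 j
        rw [hΦ2]
        split_ifs with hj
        · rfl
        · exact h0 j hj
      rw [Prod.norm_def, h2, hΦ1]
      simp
    refine ⟨z, ?_, ?_, ?_, ?_⟩
    · intro j hj
      have := hΦ2 z j
      rw [hz2, if_neg hj] at this
      exact this.symm
    · intro j i hi
      exact hz1 ⟨j, i, hi⟩
    · rw [← hΦ1, hz2]; rfl
    · intro j
      rw [← hΦh]
      exact (norm_le_pi_norm (h - z) j).trans hz3
  choose κ hκ hh using hone
  obtain ⟨M, hM⟩ := Finite.exists_le κ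
  refine ⟨max M 1, le_max_right _ _, fun C T h h0 h1 => ?_⟩
  obtain ⟨z, a, b, c, e⟩ := hh (C, T) h h0 h1
  refine ⟨z, a, b, c, fun j => (e j).trans ?_⟩
  gcongr
  exact (hM _).trans (le_max_left _ _)

lemma card_filter_append {n m : ℕ} (p : Fin (n + m) → Prop) [DecidablePred p] :
    (Finset.univ.filter p).card =
      (Finset.univ.filter (fun i : Fin n => p (Fin.castAdd m i))).card +
      (Finset.univ.filter (fun i : Fin m => p (Fin.natAdd n i))).card := by
  simp only [Finset.card_filter]
  rw [Fin.sum_univ_add]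

lemma hcnt_append {d n m : ℕ} (X : Fin n → E d) (Y : Fin m → E d) (a x : E d) :
    hcnt (Fin.append X Y) a x = hcnt X a x + hcnt Y a x := by
  unfold hcnt
  rw [card_filter_append]
  simp

/-- If the only relations among the `z j`, `j ∈ C`, are the constant ones, the span is big. -/
lemma finrank_of_const {V : Type*} [AddCommGroup V] [Module ℝ V] {ι : Type*}
    [Fintype ι] [Nonempty ι] (z : ι → V)
    (h : ∀ β : ι → ℝ, ∑ j, β j • z j = 0 → ∀ i j, β i = β j) :
    Fintype.card ι - 1 ≤ Module.finrank ℝ (Submodule.span ℝ (Set.range z)) := by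
  classical
  let L : (ι → ℝ) →ₗ[ℝ] V := Fintype.linearCombination ℝ z
  have h1 := LinearMap.finrank_range_add_finrank_ker L
  have h2 : LinearMap.range L = Submodule.span ℝ (Set.range z) := Fintype.range_linearCombination ℝ z
  have h3 : Module.finrank ℝ (LinearMap.ker L) ≤ 1 := by
    have hle : LinearMap.ker L ≤ Submodule.span ℝ {(fun _ => 1 : ι → ℝ)} := by
      intro β hβ
      have hβ' : ∑ j, β j • z j = 0 := by
        have : L β = 0 := hβ
        rwa [Fintype.linearCombination_apply] at this
      have hc := h β hβ'
      rw [Submodule.mem_span_singleton]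
      refine ⟨β (Classical.arbitrary ι), ?_⟩
      ext j
      simp [hc _ j]
    refine (Submodule.finrank_mono hle).trans ?_
    exact (finrank_span_le_card _).trans (by simp)
  rw [h2] at h1
  simp only [Module.finrank_fintype_fun_eq_card] at h1
  omega

lemma Cfg.split {d n k : ℕ} {X : Fin n → E d} {f : Fin (d + 1) → E d × ℝ} {η : ℝ}
    {T : Fin (d + 1) → Finset (Fin n)} (H : Cfg X k f η T) {κ : ℝ} (hκ1 : 1 ≤ κ)
    (hκ : ∀ (C : Finset (Fin (d + 1))) (T : Fin (d + 1) → Finset (Fin n))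
      (h : Fin (d + 1) → E d × ℝ), (∀ j, j ∉ C → h j = 0) →
      (∀ j, ∀ i ∈ T j, ev (h j) (X i) ≤ 0) →
      ∃ z : Fin (d + 1) → E d × ℝ, (∀ j, j ∉ C → z j = 0) ∧
        (∀ j, ∀ i ∈ T j, ev (z j) (X i) ≤ 0) ∧ ∑ j, z j = 0 ∧
        ∀ j, ‖h j - z j‖ ≤ κ * ‖∑ j, h j‖)
    {x : E d} {C : Finset (Fin (d + 1))} {K : ℝ} (hK : 0 < K) (hPP : PP f x C K)
    (hmin : ∀ C' ⊂ C, ¬ PP f x C' (2 * ((d + 1) * κ) * K)) :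
    ∃ z : Fin (d + 1) → E d × ℝ, (∀ j, ∀ i ∈ T j, ev (z j) (X i) ≤ 0) ∧
      ∑ j ∈ C, z j = 0 ∧ ∀ β : Fin (d + 1) → ℝ, ∑ j ∈ C, β j • z j = 0 →
        ∀ i ∈ C, ∀ j ∈ C, β i = β j := by
  classical
  obtain ⟨θ, hθ0, hθC, hpos, hle⟩ := hPP
  obtain ⟨z, hzC, hzT, hzs, hzn⟩ := hκ C T (fun j => θ j • f j)
    (fun j hj => by rw [hθC j hj, zero_smul])
    (fun j i hi => by
      rw [ev_smul]
      exact mul_nonpos_of_nonneg_of_nonpos (hθ0 j) (H.le j i hi))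
  set g := ∑ j, θ j • f j with hg
  have hsumC : ∀ c : Fin (d + 1) → ℝ, ∑ j ∈ C, c j • z j = ∑ j, c j • z j := by
    intro c
    apply Finset.sum_subset (Finset.subset_univ _)
    intro j _ hj
    rw [hzC j hj, smul_zero]
  refine ⟨z, hzT, ?_, ?_⟩
  · have := hsumC (fun _ => 1)
    simp only [one_smul] at this
    rw [this, hzs]
  intro β hβ
  rw [hsumC] at hβ
  by_contra hcon
  push Not at hcon
  obtain ⟨a, ha, b, hb, hab⟩ := hcon
  obtain ⟨i1, hi1C, hi1⟩ := Finset.exists_max_image C β ⟨a, ha⟩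
  obtain ⟨i0, hi0C, hi0⟩ := Finset.exists_min_image C β ⟨a, ha⟩
  have hlt : β i0 < β i1 := by
    rcases lt_or_gt_of_ne hab with h | h
    · exact lt_of_le_of_lt (hi0 a ha) (lt_of_lt_of_le h (hi1 b hb))
    · exact lt_of_le_of_lt (hi0 b hb) (lt_of_lt_of_le h (hi1 a ha))
  have hD : 0 < β i1 - β i0 := sub_pos.2 hlt
  let γ : Fin (d + 1) → ℝ := fun j => if j ∈ C then (β j - β i0) / (β i1 - β i0) else 0
  have hγ0 : ∀ j, 0 ≤ γ j := by
    intro j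
    simp only [γ]
    split_ifs with hj
    · exact div_nonneg (sub_nonneg.2 (hi0 j hj)) hD.le
    · exact le_rfl
  have hγ1 : ∀ j, γ j ≤ 1 := by
    intro j
    simp only [γ]
    split_ifs with hj
    · rw [div_le_one hD]; linarith [hi1 j hj]
    · exact zero_le_one
  have hγz : ∑ j, γ j • z j = 0 := by
    have h1 : ∀ j, γ j • z j = (β i1 - β i0)⁻¹ • (β j • z j - β i0 • z j) := by
      intro j
      by_cases hj : j ∈ C
      · simp only [γ, if_pos hj]
        rw [← sub_smul, smul_smul]; congr 1; ring
      · rw [hzC j hj]; simp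
    rw [Finset.sum_congr rfl (fun j _ => h1 j), ← Finset.smul_sum, Finset.sum_sub_distrib, hβ,
      ← Finset.smul_sum, hzs]
    simp
  have hγi0 : γ i0 = 0 := by simp [γ]
  have hγi1 : γ i1 = 1 := by simp only [γ, if_pos hi1C]; exact div_self hD.ne'
  have hgz0 : ∀ δ : Fin (d + 1) → ℝ, (∀ j, 0 ≤ δ j) → (∀ j, δ j ≤ 1) → ∑ j, δ j • z j = 0 →
      ‖∑ j, (δ j * θ j) • f j‖ ≤ ((d + 1) * κ) * ‖g‖ := by
    intro δ h0 h1 hs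
    have : ∑ j, (δ j * θ j) • f j = ∑ j, δ j • (θ j • f j - z j) := by
      simp only [smul_sub, Finset.sum_sub_distrib, hs, sub_zero, smul_smul]
    rw [this]
    refine (norm_sum_le _ _).trans ?_
    have hb : ∀ j ∈ Finset.univ, ‖δ j • (θ j • f j - z j)‖ ≤ κ * ‖g‖ := by
      intro j _
      rw [norm_smul, Real.norm_of_nonneg (h0 j)]
      refine le_trans ?_ (hzn j)
      exact mul_le_of_le_one_left (norm_nonneg _) (h1 j)
    refine (Finset.sum_le_card_nsmul _ _ _ hb).trans (le_of_eq ?_)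
    simp; ring
  have hfin : ∀ δ : Fin (d + 1) → ℝ, (∀ j, 0 ≤ δ j) → (∀ j, δ j ≤ 1) → ∑ j, δ j • z j = 0 →
      (∃ i ∈ C, δ i = 0) → ⟪g.1, x⟫ ≤ 2 * ⟪(∑ j, (δ j * θ j) • f j).1, x⟫ → False := by
    rintro δ h0 h1 hs ⟨i, hiC, hi⟩ hhalf
    apply hmin (C.erase i) (Finset.erase_ssubset hiC)
    refine ⟨fun j => δ j * θ j, fun j => mul_nonneg (h0 j) (hθ0 j), ?_, by linarith, ?_⟩
    · intro j hj
      show δ j * θ j = 0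
      by_cases hji : j = i
      · rw [hji, hi, zero_mul]
      · have : j ∉ C := fun hjC => hj (Finset.mem_erase.2 ⟨hji, hjC⟩)
        rw [hθC j this, mul_zero]
    · have hp : (0 : ℝ) ≤ (d + 1) * κ := by positivity
      calc _ ≤ (((d + 1) * κ) * ‖g‖) * ‖x‖ := by gcongr; exact hgz0 δ h0 h1 hs
        _ = ((d + 1) * κ) * (‖g‖ * ‖x‖) := by ring
        _ ≤ ((d + 1) * κ) * (K * ⟪g.1, x⟫) := by gcongr
        _ ≤ ((d + 1) * κ) * (K * (2 * ⟪(∑ j, (δ j * θ j) • f j).1, x⟫)) := by gcongr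
        _ = _ := by ring
  have hsum : ∑ j, (γ j * θ j) • f j + ∑ j, ((1 - γ j) * θ j) • f j = g := by
    rw [← Finset.sum_add_distrib, hg]
    apply Finset.sum_congr rfl
    intro j _
    rw [← add_smul]; congr 1; ring
  have hsum' : ⟪(∑ j, (γ j * θ j) • f j).1, x⟫ + ⟪(∑ j, ((1 - γ j) * θ j) • f j).1, x⟫ =
      ⟪g.1, x⟫ := by
    rw [← hsum, Prod.fst_add, inner_add_left]
  rcases le_total (⟪g.1, x⟫) (2 * ⟪(∑ j, (γ j * θ j) • f j).1, x⟫) with h | h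
  · exact hfin γ hγ0 hγ1 hγz ⟨i0, hi0C, hγi0⟩ h
  · refine hfin (fun j => 1 - γ j) (fun j => by linarith [hγ1 j]) (fun j => by linarith [hγ0 j])
      ?_ ⟨i1, hi1C, by rw [hγi1, sub_self]⟩ (by linarith)
    simp only [sub_smul, one_smul, Finset.sum_sub_distrib, hzs, hγz, sub_zero]

lemma lb_core {d n m k h : ℕ} (hd : 2 ≤ d) (hdn : d + 1 ≤ n) (hkn : k ≤ n) (X : Fin n → E d)
    (hgp : inGeneralPosition X) (hX : ProjDeep X k) {R : ℝ} (hR0 : 0 ≤ R) (hR : ∀ i, ‖X i‖ ≤ R)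
    {κ : ℝ} (hκ1 : 1 ≤ κ)
    (hκ : ∀ (C : Finset (Fin (d + 1))) (T : Fin (d + 1) → Finset (Fin n))
      (h : Fin (d + 1) → E d × ℝ), (∀ j, j ∉ C → h j = 0) →
      (∀ j, ∀ i ∈ T j, ev (h j) (X i) ≤ 0) →
      ∃ z : Fin (d + 1) → E d × ℝ, (∀ j, j ∉ C → z j = 0) ∧
        (∀ j, ∀ i ∈ T j, ev (z j) (X i) ≤ 0) ∧ ∑ j, z j = 0 ∧
        ∀ j, ‖h j - z j‖ ≤ κ * ‖∑ j, h j‖)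
    (Y : Fin m → E d) (hh1 : 1 ≤ h) (hhk : h < k) (x : E d)
    (hx : ∀ a : E d, a ≠ 0 → h ≤ hcnt (Fin.append X Y) a x)
    (hmax : ∀ x', ∃ a : E d, a ≠ 0 ∧ hcnt (Fin.append X Y) a x' ≤ h)
    (hbig : (2 * ((d + 1) * κ)) ^ (d + 1) * (R + 1) * (R + 1) < ‖x‖) : False := by
  classical
  set Z := Fin.append X Y with hZ
  have hZX : ∀ i, Z (Fin.castAdd m i) = X i := fun i => by simp [hZ]
  have hZY : ∀ i, Z (Fin.natAdd n i) = Y i := fun i => by simp [hZ]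
  obtain ⟨f, η, TZ, hη, hsum, hTZ, hfZ⟩ := exists_cover Z hmax
  let T : Fin (d + 1) → Finset (Fin n) := fun j => Finset.univ.filter (fun i => Fin.castAdd m i ∈ TZ j)
  let W : Fin (d + 1) → Finset (Fin m) := fun j => Finset.univ.filter (fun i => Fin.natAdd n i ∉ TZ j)
  have hTW : ∀ j, ((T j)ᶜ).card + (W j).card ≤ h := by
    intro j
    refine le_trans (le_of_eq ?_) (hTZ j)
    have h1 : (TZ j)ᶜ = Finset.univ.filter (fun i => i ∉ TZ j) := by ext; simp
    have h2 : (T j)ᶜ = Finset.univ.filter (fun i => Fin.castAdd m i ∉ TZ j) := by ext; simp [T]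
    rw [h1, card_filter_append, h2]
  have H : Cfg X k f η T := by
    refine ⟨by omega, hkn, hX, hη, hsum, fun j => ?_, fun j i hi => ?_⟩
    · have := hTW j; omega
    · have := hfZ j _ (Finset.mem_filter.1 hi).2
      rwa [hZX] at this
  -- constants
  set μ : ℝ := 2 * ((d + 1) * κ) with hμ
  have hμ1 : 1 ≤ μ := by
    have : (1 : ℝ) ≤ (d + 1) * κ := by
      have : (0 : ℝ) ≤ d := by positivity
      nlinarith
    linarith
  have hpow : ∀ c, 1 ≤ μ ^ c := fun c => one_le_pow₀ hμ1
  have hxR : R < ‖x‖ := by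
    have h1 := hpow (d + 1)
    have h2 : 1 * ((R + 1) * (R + 1)) ≤ μ ^ (d + 1) * ((R + 1) * (R + 1)) := by gcongr
    nlinarith
  let P : ℕ → Prop := fun c => ∃ C : Finset (Fin (d + 1)), C.card = c ∧ c ≤ d ∧
    PP f x C (μ ^ (d + 1 - c) * (R + 1))
  have hP : ∃ c, P c := by
    obtain ⟨C, hC, hPP⟩ := H.start hR0 hR x hxR
    refine ⟨d, C, hC, le_rfl, hPP.mono ?_⟩
    have := hpow (d + 1 - d)
    nlinarith
  obtain ⟨C, hCc, hCd, hPP⟩ := Nat.find_spec hP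
  rw [← hCc] at hCd hPP
  have hmin : ∀ C' ⊂ C, ¬ PP f x C' (2 * ((d + 1) * κ) * (μ ^ (d + 1 - C.card) * (R + 1))) := by
    intro C' hC' hPP'
    have hlt := Finset.card_lt_card hC'
    refine Nat.find_min hP (m := C'.card) (by omega) ⟨C', rfl, by omega, hPP'.mono ?_⟩
    rw [← hμ, ← mul_assoc, ← pow_succ']
    have : μ ^ (d + 1 - C.card + 1) ≤ μ ^ (d + 1 - C'.card) :=
      pow_le_pow_right₀ hμ1 (by omega)
    gcongr
  set K := μ ^ (d + 1 - C.card) * (R + 1) with hK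
  have hK0 : 0 < K := by
    have := hpow (d + 1 - C.card)
    have : 0 < μ ^ (d + 1 - C.card) := by linarith
    positivity
  obtain ⟨z, hzT, hzs, hzβ⟩ := H.split hκ1 hκ hK0 hPP hmin
  obtain ⟨θ, hθ0, hθC, hpos, hle⟩ := hPP
  set g := ∑ j, θ j • f j with hg
  have hKx : K * (R + 1) < ‖x‖ := by
    refine lt_of_le_of_lt ?_ hbig
    rw [hK]
    have : μ ^ (d + 1 - C.card) ≤ μ ^ (d + 1) := pow_le_pow_right₀ hμ1 (by omega)
    gcongr
  obtain ⟨hgx, hgX⟩ := PP_far hK0 hR hpos hle hKx hR0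
  have hg1 : g.1 ≠ 0 := by
    intro h0
    rw [h0, inner_zero_left] at hpos
    exact lt_irrefl _ hpos
  have hgC : g = ∑ j ∈ C, θ j • f j := by
    rw [hg]; symm
    apply Finset.sum_subset (Finset.subset_univ _)
    intro j _ hj
    rw [hθC j hj, zero_smul]
  -- (B)
  have hB : ∀ j, ∃ i, ev (f j) x ≤ ev (f j) (X i) := by
    intro j
    obtain ⟨i, hi⟩ := H.exists_pos j
    refine ⟨i, ?_⟩
    rcases le_or_gt (ev (f j) x) 0 with h0 | h0
    · linarith
    by_cases hf0 : (f j).1 = 0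
    · simp [ev, hf0]
    have h1 := hx _ hf0
    rw [hcnt_eq_ev] at h1
    have hsub : Finset.univ.filter (fun i => ev (f j) x ≤ ev (f j) (Z i)) ⊆ (TZ j)ᶜ := by
      intro i hi
      rw [Finset.mem_compl]
      intro hiT
      have := hfZ j i hiT
      have := (Finset.mem_filter.1 hi).2
      linarith
    have heq := Finset.eq_of_subset_of_card_le hsub ((hTZ j).trans h1)
    have : Fin.castAdd m i ∈ (TZ j)ᶜ := by
      rw [Finset.mem_compl]
      intro hiT
      have := hfZ j _ hiT
      rw [hZX] at this
      linarith
    rw [← heq] at this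
    have := (Finset.mem_filter.1 this).2
    rwa [hZX] at this
  -- |C| ≥ 2
  have hC2 : 2 ≤ C.card := by
    by_contra hlt
    have hle1 : C.card ≤ 1 := by omega
    rcases Nat.le_one_iff_eq_zero_or_eq_one.1 hle1 with h0 | h1
    · rw [Finset.card_eq_zero] at h0
      rw [h0, Finset.sum_empty] at hgC
      rw [hgC, ev_zero] at hgx
      exact lt_irrefl _ hgx
    · obtain ⟨j, rfl⟩ := Finset.card_eq_one.1 h1
      rw [Finset.sum_singleton] at hgC
      obtain ⟨i, hi⟩ := hB j
      have := hgX i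
      rw [hgC, ev_smul, ev_smul] at this
      have := mul_le_mul_of_nonneg_left hi (hθ0 j)
      linarith
  -- Y count
  have hY : h ≤ ∑ j ∈ C, (W j).card := by
    have h1 := hx _ hg1
    rw [hcnt_eq_ev, card_filter_append] at h1
    have h2 : (Finset.univ.filter (fun i : Fin n => ev g x ≤ ev g (Z (Fin.castAdd m i)))) = ∅ := by
      apply Finset.filter_eq_empty_iff.2
      intro i _
      rw [hZX]
      exact not_le.2 (hgX i)
    rw [h2, Finset.card_empty, zero_add] at h1
    refine h1.trans (le_trans (Finset.card_le_card ?_) Finset.card_biUnion_le)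
    intro i hi
    have hi' := (Finset.mem_filter.1 hi).2
    have hpos' : 0 < ev g (Z (Fin.natAdd n i)) := lt_of_lt_of_le hgx hi'
    rw [hgC, ev_sum] at hpos'
    obtain ⟨j, hjC, hj⟩ := Finset.exists_lt_of_sum_lt
      (f := fun _ => (0 : ℝ)) (by simpa using hpos')
    rw [ev_smul] at hj
    rw [Finset.mem_biUnion]
    refine ⟨j, hjC, Finset.mem_filter.2 ⟨Finset.mem_univ _, fun hiT => ?_⟩⟩
    have := mul_nonpos_of_nonneg_of_nonpos (hθ0 j) (hfZ j _ hiT)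
    linarith
  -- greedy
  have hCne : C.Nonempty := by rw [← Finset.card_pos]; omega
  have hgr : ∑ j ∈ C, (k - 1 - ((T j)ᶜ).card) ≤ 1 := by
    have : Nonempty C := hCne.to_subtype
    have hrel : ∀ β : C → ℝ, ∑ j, β j • z j = 0 → ∀ i j, β i = β j := by
      intro β hβ i j
      have := hzβ (fun j => if hj : j ∈ C then β ⟨j, hj⟩ else 0) (by
        rw [← Finset.sum_coe_sort]
        simpa using hβ) i i.2 j j.2
      simpa using this
    have := greedy (by omega) hkn hdn X hgp hX (ι := C) (by simpa using hCd) (fun j => T j)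
      (fun j => H.card j) (fun j => z j) (fun j i hi => hzT j i hi) (by
        intro j hj
        obtain ⟨j', hj'C, hj'⟩ := Finset.exists_mem_ne (s := C) (by omega) j
        have := hrel (Pi.single j 1) (by
          rw [Finset.sum_eq_single j]
          · simp [hj]
          · intro b _ hb; simp [hb]
          · simp) j ⟨j', hj'C⟩
        rw [Pi.single_eq_same, Pi.single_eq_of_ne] at this
        · exact one_ne_zero this
        · intro hc; exact hj' (congrArg Subtype.val hc))
      (by rw [Finset.sum_coe_sort C z]; exact hzs)
      (finrank_of_const _ hrel)
    rw [← Finset.sum_coe_sort]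
    exact this
  -- finish
  have hsum2 : ∑ j ∈ C, ((W j).card + (k - 1 - h)) ≤ ∑ j ∈ C, (k - 1 - ((T j)ᶜ).card) := by
    apply Finset.sum_le_sum
    intro j _
    have := hTW j
    omega
  rw [Finset.sum_add_distrib, Finset.sum_const, smul_eq_mul] at hsum2
  have hk1 : h = 1 := by omega
  obtain ⟨j, hjC, hj⟩ : ∃ j ∈ C, (W j).card ≠ 0 := by
    apply Finset.exists_ne_zero_of_sum_ne_zero
    omega
  have hb : ((T j)ᶜ).card = 0 := by have := hTW j; omega
  obtain ⟨i, hi⟩ := H.exists_pos j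
  have hiT : i ∈ T j := by
    by_contra hc
    rw [Finset.card_eq_zero] at hb
    have : i ∈ (T j)ᶜ := Finset.mem_compl.2 hc
    rw [hb] at this
    simp at this
  have := H.le j i hiT
  linarith

lemma exists_norm_bound {d n : ℕ} (X : Fin n → E d) : ∃ R : ℝ, 0 ≤ R ∧ ∀ i, ‖X i‖ ≤ R := by
  obtain ⟨M, hM⟩ := Finite.exists_le (fun i => ‖X i‖)
  exact ⟨max M 0, le_max_right _ _, fun i => (hM i).trans (le_max_left _ _)⟩

lemma lb_degenerate {d n m k h : ℕ} (hd : 1 ≤ d) (hn : 1 ≤ n) (hnd : n ≤ d) (hkn : k ≤ n)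
    (X : Fin n → E d) (hX : ProjDeep X k) (Y : Fin m → E d) (hhk : h < k)
    (hmax : ∀ x', ∃ a : E d, a ≠ 0 ∧ hcnt (Fin.append X Y) a x' ≤ h) : False := by
  classical
  obtain ⟨w, c, hw, hwc⟩ : ∃ (w : E d) (c : ℝ), w ≠ 0 ∧ ∀ i, ⟪w, X i⟫ = c := by
    let L : (E d × ℝ) →ₗ[ℝ] (Fin n → ℝ) := LinearMap.pi (fun i => evL (X i))
    have hker : LinearMap.ker L ≠ ⊥ := by
      apply LinearMap.ker_ne_bot_of_finrank_lt
      simp; omega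
    obtain ⟨a, ha, ha0⟩ := Submodule.exists_mem_ne_zero_of_ne_bot hker
    have hai : ∀ i, ev a (X i) = 0 := fun i => congrFun (show L a = 0 from ha) i
    refine ⟨a.1, -a.2, ?_, fun i => ?_⟩
    · intro h1
      apply ha0
      have := hai ⟨0, hn⟩
      simp only [ev, h1, inner_zero_left, zero_add] at this
      exact Prod.ext h1 this
    · have := hai i
      simp only [ev] at this
      linarith
  obtain ⟨f, η, TZ, hη, hsum, hTZ, hfZ⟩ := exists_cover (Fin.append X Y) hmax
  have hww : ⟪w, w⟫ ≠ 0 := by simpa using hw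
  let p : E d × ℝ := (w, -c)
  let f' : Fin (d + 1) → E d × ℝ := fun j => f j - (⟪(f j).1, w⟫ / ⟪w, w⟫) • p
  have hevf : ∀ j i, ev (f' j) (X i) = ev (f j) (X i) := by
    intro j i
    simp only [f', ev_sub, ev_smul]
    have : ev p (X i) = 0 := by simp [p, ev, hwc]
    rw [this]; ring
  refine core_false hd hkn X hX f' η hη ?_ w hw ?_ ?_
  · simp only [f', Finset.sum_sub_distrib, hsum]
    rw [← Finset.sum_smul, ← Finset.sum_div, ← sum_inner]
    have : ∑ j, (f j).1 = 0 := by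
      have := congrArg Prod.fst hsum
      simpa [Prod.fst_sum] using this
    rw [this]
    simp
  · intro j
    simp only [f', p, Prod.fst_sub, Prod.smul_fst, inner_sub_left, real_inner_smul_left]
    rw [div_mul_cancel₀ _ hww, sub_self]
  · intro j
    have h1 := hTZ j
    have h2 : (TZ j)ᶜ = Finset.univ.filter (fun i => i ∉ TZ j) := by ext; simp
    rw [h2, card_filter_append] at h1
    have h3 : (Finset.univ.filter (fun i => 0 < ev (f' j) (X i))).card ≤
        (Finset.univ.filter (fun i : Fin n => Fin.castAdd m i ∉ TZ j)).card := by
      apply Finset.card_le_card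
      intro i hi
      have hi' := (Finset.mem_filter.1 hi).2
      refine Finset.mem_filter.2 ⟨Finset.mem_univ _, fun hiT => ?_⟩
      have := hfZ j _ hiT
      rw [Fin.append_left, ← hevf] at this
      linarith
    omega

lemma lower_bound {d n m k : ℕ} (hd : 2 ≤ d) (hn : 1 ≤ n) (hkn : k ≤ n) (X : Fin n → E d)
    (hgp : inGeneralPosition X) (hX : ProjDeep X k) (hmk : m < k) :
    ∃ R0 : ℝ, ∀ (Y : Fin m → E d), ∀ x ∈ MSet (Fin.append X Y), ‖x‖ ≤ R0 := by
  obtain ⟨R, hR0, hR⟩ := exists_norm_bound X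
  obtain ⟨κ, hκ1, hκ⟩ := hoffman_unif X
  refine ⟨max R ((2 * ((d + 1) * κ)) ^ (d + 1) * (R + 1) * (R + 1)), fun Y x hxM => ?_⟩
  by_contra hcon
  push Not at hcon
  have hxR : R < ‖x‖ := lt_of_le_of_lt (le_max_left _ _) hcon
  have hxB := lt_of_le_of_lt (le_max_right _ _) hcon
  obtain ⟨h, hh1, -, -, hM, -, hmax⟩ := maxDepth_spec (by omega) (by omega) (Fin.append X Y)
  have hx := (hM x).1 hxM
  have hx0 : x ≠ 0 := by
    intro h0
    rw [h0, norm_zero] at hxR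
    linarith
  have hhm : h ≤ m := by
    refine (hx x hx0).trans ?_
    rw [hcnt_append]
    have h1 : hcnt X x x = 0 := by
      unfold hcnt
      rw [Finset.card_eq_zero, Finset.filter_eq_empty_iff]
      intro i _
      rw [not_le, real_inner_self_eq_norm_sq]
      refine lt_of_le_of_lt (real_inner_le_norm _ _) ?_
      have := hR i
      have : 0 < ‖x‖ := norm_pos_iff.2 hx0
      nlinarith
    rw [h1, zero_add]
    exact hcnt_le _ _ _
  rcases le_or_gt n d with hnd | hnd
  · exact lb_degenerate (by omega) hn hnd hkn X hX Y (by omega) hmax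
  · exact lb_core hd hnd hkn X hgp hX hR0 hR hκ1 hκ Y hh1 (by omega) x hx hmax hxB

lemma norm_setAverage_le {d : ℕ} (K : Set (E d)) {R0 : ℝ} (hR : 0 ≤ R0)
    (hK : ∀ x ∈ K, ‖x‖ ≤ R0) : ‖setAverage K‖ ≤ R0 := by
  unfold setAverage
  set μ : Measure (E d) := μH[(Module.finrank ℝ (affineSpan ℝ K).direction : ℝ)] with hμ
  by_cases htop : μ K = ⊤
  · simp [htop, hR]
  have h1 : ‖∫ x in K, x ∂μ‖ ≤ R0 * μ.real K :=
    norm_setIntegral_le_of_norm_le_const (lt_top_iff_ne_top.2 htop) (fun x hx => hK x hx)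
  rw [norm_smul, norm_inv, Real.norm_of_nonneg ENNReal.toReal_nonneg]
  rcases eq_or_lt_of_le (ENNReal.toReal_nonneg (a := μ K)) with h0 | h0
  · rw [← h0]; simpa using hR
  · rw [inv_mul_le_iff₀ h0]
    refine h1.trans (le_of_eq ?_)
    rw [mul_comm]; rfl

lemma not_breaksDown {d n m k : ℕ} (hd : 2 ≤ d) (hn : 1 ≤ n) (hkn : k ≤ n) (X : Fin n → E d)
    (hgp : inGeneralPosition X) (hX : ProjDeep X k) (hmk : m < k) : ¬ breaksDown X m := by
  intro hb
  obtain ⟨R0, hR0⟩ := lower_bound hd hn hkn X hgp hX hmk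
  obtain ⟨Y, hY⟩ := hb (max R0 0 + ‖TukeyMedian X‖)
  have h1 : ‖TukeyMedian (Fin.append X Y)‖ ≤ max R0 0 :=
    norm_setAverage_le _ (le_max_right _ _) (fun x hx => (hR0 Y x hx).trans (le_max_left _ _))
  have h2 := norm_sub_le (TukeyMedian (Fin.append X Y)) (TukeyMedian X)
  linarith

lemma hausdorff_pos_finite {d : ℕ} {M : Set (E d)} (hc : Convex ℝ M) (hk : IsCompact M)
    (x : E d) (hx : x ∈ M) :
    0 < μH[(Module.finrank ℝ (affineSpan ℝ M).direction : ℝ)] M ∧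
      μH[(Module.finrank ℝ (affineSpan ℝ M).direction : ℝ)] M < ⊤ := by
  set V := (affineSpan ℝ M).direction with hV
  let φ : V →ᵃ[ℝ] E d := V.subtype.toAffineMap + AffineMap.const ℝ V x
  have hφ : ∀ v : V, φ v = (v : E d) + x := fun v => rfl
  have hiso : Isometry φ := by
    apply Isometry.of_dist_eq
    intro v w
    simp [hφ]; rfl
  set N : Set V := φ ⁻¹' M with hN
  have himg : φ '' N = M := by
    apply Set.image_preimage_eq_of_subset
    intro p hp
    refine ⟨⟨p - x, ?_⟩, ?_⟩
    · exact AffineSubspace.vsub_mem_direction (subset_affineSpan ℝ M hp) (subset_affineSpan ℝ M hx)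
    · simp [hφ]
  have hmeas : μH[(Module.finrank ℝ V : ℝ)] M = μH[(Module.finrank ℝ V : ℝ)] N := by
    rw [← himg]
    exact hiso.hausdorffMeasure_image (Or.inl (by positivity)) N
  have hNc : Convex ℝ N := hc.affine_preimage φ
  have hNk : IsCompact N := hiso.isClosedEmbedding.isCompact_preimage hk
  have hspan : affineSpan ℝ N = ⊤ := by
    have h0 : (0 : V) ∈ N := by
      show φ 0 ∈ M
      rw [hφ]; simpa using hx
    have hmap : (affineSpan ℝ N).map φ = affineSpan ℝ M := by
      rw [AffineSubspace.map_span, himg]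
    have hdir := congrArg AffineSubspace.direction hmap
    rw [AffineSubspace.map_direction] at hdir
    have hlin : φ.linear = V.subtype := by
      simp [φ]
    rw [hlin, ← hV] at hdir
    rw [← AffineSubspace.direction_eq_top_iff_of_nonempty ⟨0, subset_affineSpan ℝ N h0⟩]
    apply Submodule.map_injective_of_injective V.injective_subtype
    rw [hdir, Submodule.map_subtype_top]
  rw [hmeas]
  constructor
  · have hInt : (interior N).Nonempty := hNc.interior_nonempty_iff_affineSpan_eq_top.2 hspan
    exact lt_of_lt_of_le (isOpen_interior.measure_pos _ hInt) (measure_mono interior_subset)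
  · exact hNk.measure_lt_top

lemma inner_setAverage_ge {d : ℕ} {M : Set (E d)} (hc : Convex ℝ M) (hk : IsCompact M)
    (x : E d) (hx : x ∈ M) (u : E d) {R r : ℝ} (hr : ⟪u, x⟫ = r) (hRr : -R ≤ r)
    (hM : ∀ p ∈ M, -R ≤ ⟪u, p⟫) :
    -R + (1 / 2) ^ d * ((r + R) / 2) ≤ ⟪u, setAverage M⟫ := by
  obtain ⟨hpos, hfin⟩ := hausdorff_pos_finite hc hk x hx
  unfold setAverage
  set D := Module.finrank ℝ (affineSpan ℝ M).direction with hD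
  have hDd : D ≤ d := by
    have := Submodule.finrank_le (affineSpan ℝ M).direction
    simpa using this
  set μ : Measure (E d) := μH[(D : ℝ)] with hμ
  have hμR : 0 < (μ M).toReal := ENNReal.toReal_pos hpos.ne' hfin.ne
  have hMm : MeasurableSet M := hk.isClosed.measurableSet
  obtain ⟨B, hB⟩ := hk.isBounded.exists_norm_le
  have hfinR : IsFiniteMeasure (μ.restrict M) := ⟨by simpa using hfin⟩
  have hInt : IntegrableOn (fun p : E d => p) M μ := by
    refine Integrable.of_bound (C := B) (by fun_prop) ?_
    rw [ae_restrict_iff' hMm]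
    exact Filter.Eventually.of_forall hB
  have hintu : IntegrableOn (fun p : E d => ⟪u, p⟫) M μ := hInt.const_inner u
  have hintc : IntegrableOn (fun _ : E d => R) M μ := integrable_const R
  have hints : IntegrableOn (fun p : E d => ⟪u, p⟫ + R) M μ := hintu.add hintc
  -- the half copy
  set M' : Set (E d) := AffineMap.homothety x (1 / 2 : ℝ) '' M with hM'
  have hM'sub : M' ⊆ M := by
    rintro _ ⟨p, hp, rfl⟩
    have : AffineMap.homothety x (1 / 2 : ℝ) p = (1 / 2 : ℝ) • x + (1 / 2 : ℝ) • p := by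
      simp only [AffineMap.homothety_apply, vsub_eq_sub, vadd_eq_add]
      module
    rw [this]
    exact hc hx hp (by norm_num) (by norm_num) (by norm_num)
  have hM'k : IsCompact M' := hk.image (AffineMap.homothety_continuous x (1 / 2 : ℝ))
  have hM'm : MeasurableSet M' := hM'k.isClosed.measurableSet
  have hM'μ : (μ M').toReal = (1 / 2) ^ D * (μ M).toReal := by
    rw [hμ, hM', hausdorffMeasure_homothety_image (by positivity) x (by norm_num) M]
    simp [ENNReal.toReal_mul, ENNReal.smul_def]
  have hM'u : ∀ p ∈ M', (r + R) / 2 ≤ ⟪u, p⟫ + R := by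
    rintro _ ⟨p, hp, rfl⟩
    have : AffineMap.homothety x (1 / 2 : ℝ) p = (1 / 2 : ℝ) • x + (1 / 2 : ℝ) • p := by
      simp only [AffineMap.homothety_apply, vsub_eq_sub, vadd_eq_add]
      module
    rw [this, inner_add_right, inner_smul_right, inner_smul_right, hr]
    linarith [hM p hp]
  have h1 : (1 / 2) ^ d * ((r + R) / 2) * (μ M).toReal ≤ ∫ p in M, (⟪u, p⟫ + R) ∂μ := by
    have hfinR' : IsFiniteMeasure (μ.restrict M') :=
      ⟨by simpa using lt_of_le_of_lt (measure_mono hM'sub) hfin⟩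
    calc (1 / 2) ^ d * ((r + R) / 2) * (μ M).toReal
        ≤ (1 / 2) ^ D * ((r + R) / 2) * (μ M).toReal := by
          have : (0 : ℝ) ≤ (r + R) / 2 := by linarith
          gcongr ?_ * _ * _
          exact pow_le_pow_of_le_one (by norm_num) (by norm_num) hDd
      _ = ∫ p in M', ((r + R) / 2) ∂μ := by
          rw [setIntegral_const, smul_eq_mul, measureReal_def, hM'μ]; ring
      _ ≤ ∫ p in M', (⟪u, p⟫ + R) ∂μ :=
          setIntegral_mono_on (integrable_const _) (hints.mono_set hM'sub) hM'm hM'u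
      _ ≤ ∫ p in M, (⟪u, p⟫ + R) ∂μ := by
          apply setIntegral_mono_set hints
          · rw [Filter.EventuallyLE, ae_restrict_iff' hMm]
            refine Filter.Eventually.of_forall fun p hp => ?_
            show (0 : ℝ) ≤ ⟪u, p⟫ + R
            linarith [hM p hp]
          · exact hM'sub.eventuallyLE
  have h2 : ∫ p in M, (⟪u, p⟫ + R) ∂μ = ⟪u, ∫ p in M, p ∂μ⟫ + (μ M).toReal * R := by
    rw [integral_add hintu hintc, integral_inner hInt, setIntegral_const, smul_eq_mul,
      measureReal_def]
  rw [inner_smul_right, inv_mul_eq_div, le_div_iff₀ hμR]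
  linarith

lemma hcnt_antitone {d n : ℕ} (Z : Fin n → E d) (a : E d) {p q : E d} (h : ⟪a, p⟫ ≤ ⟪a, q⟫) :
    hcnt Z a q ≤ hcnt Z a p := by
  unfold hcnt
  apply Finset.card_le_card
  intro i hi
  rw [Finset.mem_filter] at hi ⊢
  exact ⟨hi.1, h.trans hi.2⟩

lemma convex_deep {d n : ℕ} (Z : Fin n → E d) (k : ℕ) :
    Convex ℝ {p | ∀ a : E d, a ≠ 0 → k ≤ hcnt Z a p} := by
  intro p hp q hq s t hs ht hst a ha
  have hin : ⟪a, s • p + t • q⟫ = s * ⟪a, p⟫ + t * ⟪a, q⟫ := by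
    simp [inner_add_right, inner_smul_right]
  rcases le_total ⟪a, p⟫ ⟪a, q⟫ with h | h
  · refine (hq a ha).trans (hcnt_antitone Z a ?_)
    rw [hin]; (have : t = 1 - s := by linarith); subst this; nlinarith [mul_le_mul_of_nonneg_left h hs]
  · refine (hp a ha).trans (hcnt_antitone Z a ?_)
    rw [hin]; (have : s = 1 - t := by linarith); subst this; nlinarith [mul_le_mul_of_nonneg_left h ht]

lemma closed_deep {d n : ℕ} (Z : Fin n → E d) (k : ℕ) :
    IsClosed {p | ∀ a : E d, a ≠ 0 → k ≤ hcnt Z a p} := by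
  classical
  have : {p | ∀ a : E d, a ≠ 0 → k ≤ hcnt Z a p} =
      ⋂ a : E d, ⋂ _ : a ≠ 0, ⋃ S : {S : Finset (Fin n) // k ≤ S.card},
        ⋂ i : Fin n, ⋂ _ : i ∈ S.1, {p | ⟪a, p⟫ ≤ ⟪a, Z i⟫} := by
    ext p
    simp only [Set.mem_iInter, Set.mem_iUnion, Set.mem_ofPred_eq]
    refine forall₂_congr fun a ha => ⟨fun h => ?_, ?_⟩
    · exact ⟨⟨_, h⟩, fun i hi => (Finset.mem_filter.1 hi).2⟩
    · rintro ⟨S, hS⟩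
      refine S.2.trans (Finset.card_le_card fun i hi => ?_)
      exact Finset.mem_filter.2 ⟨Finset.mem_univ _, hS i hi⟩
  rw [this]
  refine isClosed_iInter fun a => isClosed_iInter fun _ => isClosed_iUnion_of_finite fun S =>
    isClosed_iInter fun i => isClosed_iInter fun _ => isClosed_le (by fun_prop) (by fun_prop)

lemma compact_deep {d n : ℕ} (Z : Fin n → E d) {k : ℕ} (hk : 1 ≤ k) :
    IsCompact {p | ∀ a : E d, a ≠ 0 → k ≤ hcnt Z a p} := by
  obtain ⟨R, hR0, hR⟩ := exists_norm_bound Z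
  apply Metric.isCompact_of_isClosed_isBounded (closed_deep Z k)
  refine (Metric.isBounded_closedBall (x := (0 : E d)) (r := R)).subset fun p hp => ?_
  rw [mem_closedBall_zero_iff]
  by_cases h0 : p = 0
  · rw [h0, norm_zero]; exact hR0
  have h1 := hk.trans (hp p h0)
  unfold hcnt at h1
  obtain ⟨i, hi⟩ := Finset.card_pos.1 h1
  have hi' := (Finset.mem_filter.1 hi).2
  rw [real_inner_self_eq_norm_sq] at hi'
  have h2 := hi'.trans (real_inner_le_norm _ _)
  have h3 : 0 < ‖p‖ := norm_pos_iff.2 h0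
  rw [sq] at h2
  exact (le_of_mul_le_mul_left h2 h3).trans (hR i)

lemma embed_inner {d : ℕ} (A : Fin (d - 1) → E d) (a : E (d - 1)) (y : E d) :
    ⟪embed A a, y⟫ = ⟪a, proj A y⟫ := by
  rw [real_inner_comm, inner_embed_s13, real_inner_comm]

/-- the contaminated covering -/
lemma ub_cover {d n k : ℕ} (hd : 2 ≤ d) (X : Fin n → E d) (u : E d)
    (A : Fin (d - 1) → E d) (hA : IsAu u A) {R : ℝ} (hR0 : 0 ≤ R) (hR : ∀ i, ‖X i‖ ≤ R)
    (hproj : ∀ z, ∃ a : E (d - 1), a ≠ 0 ∧ hcnt (fun i => proj A (X i)) a z ≤ k) :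
    ∃ r0 : ℝ, ∀ r : ℝ, r0 ≤ r → ∀ p, ∃ a : E d, a ≠ 0 ∧
      hcnt (Fin.append X (fun _ : Fin k => r • u)) a p ≤ k := by
  classical
  obtain ⟨f, η, T, hη, hsum, hT, hf⟩ := exists_cover _ hproj
  set N : ℝ := ((d - 1 + 1 : ℕ) : ℝ) with hN
  have hN0 : 0 < N := by rw [hN]; positivity
  let c : Fin (d - 1 + 1) → ℝ := fun j => (f j).2 - η / (2 * N)
  obtain ⟨B, hB⟩ := Finite.exists_le (fun j => |c j|)
  have hB0 : 0 ≤ B := (abs_nonneg (c 0)).trans (hB 0)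
  have hu := hA.1
  have huu : ⟪u, u⟫ = 1 := by rw [real_inner_self_eq_norm_sq, hu]; norm_num
  have huX : ∀ i, |⟪u, X i⟫| ≤ R := fun i => by
    refine (abs_real_inner_le_norm _ _).trans ?_
    rw [hu, one_mul]; exact hR i
  refine ⟨max (R + 1) (B * R * (2 * N) / η), fun r hr p => ?_⟩
  have hrR : R + 1 ≤ r := (le_max_left _ _).trans hr
  have hr0 : 0 < r := by linarith
  have hrB : B * R / r ≤ η / (2 * N) := by
    have := (le_max_right _ _).trans hr
    rw [div_le_iff₀ hη] at this
    rw [div_le_div_iff₀ hr0 (by positivity)]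
    linarith
  rcases le_or_gt r ⟪u, p⟫ with hp | hp
  · refine ⟨u, by intro h; simp [h] at hu, ?_⟩
    rw [hcnt_append]
    have h1 : hcnt X u p = 0 := by
      unfold hcnt
      rw [Finset.card_eq_zero, Finset.filter_eq_empty_iff]
      intro i _
      rw [not_le]
      linarith [(abs_le.1 (huX i)).2]
    rw [h1, zero_add]
    exact hcnt_le _ _ _
  let F : Fin (d - 1 + 1) → E d × ℝ := fun j => (embed A (f j).1 - (c j / r) • u, c j)
  have hFe : ∀ j y, ev (F j) y = ev (f j) (proj A y) - η / (2 * N) - c j / r * ⟪u, y⟫ := by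
    intro j y
    simp only [F, ev, inner_sub_left, real_inner_smul_left, embed_inner, c]
    ring
  have hFx : ∀ j, ev (F j) (r • u) = 0 := by
    intro j
    simp only [F, ev, inner_sub_left, real_inner_smul_left, inner_smul_right, huu]
    rw [real_inner_comm, inner_u_embed hA]
    field_simp
    ring
  have hFX : ∀ j, ∀ i ∈ T j, ev (F j) (X i) ≤ 0 := by
    intro j i hi
    rw [hFe]
    have h1 := hf j i hi
    have h2 : |c j / r * ⟪u, X i⟫| ≤ B * R / r := by
      rw [abs_mul, abs_div, abs_of_pos hr0, div_mul_eq_mul_div]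
      gcongr
      · exact hB j
      · exact huX i
    have h3 := (abs_le.1 h2).1
    linarith
  have hFs : ∑ j, ev (F j) p = η / 2 * (1 - ⟪u, p⟫ / r) := by
    have h1 : ∑ j, ev (f j) (proj A p) = η := by rw [← ev_sum, hsum, ev_const]
    have h2 : ∑ j, (f j).2 = η := by
      have := congrArg Prod.snd hsum
      simpa [Prod.snd_sum] using this
    have h3 : ∑ j, c j = η / 2 := by
      simp only [c, Finset.sum_sub_distrib, h2, Finset.sum_const, Finset.card_univ,
        Fintype.card_fin, nsmul_eq_mul]
      rw [← hN]; field_simp; ring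
    simp only [hFe, Finset.sum_sub_distrib, h1, Finset.sum_const, Finset.card_univ,
      Fintype.card_fin, nsmul_eq_mul, ← Finset.sum_mul, ← Finset.sum_div, h3]
    rw [← hN]
    field_simp; ring
  have hFpos : 0 < ∑ j, ev (F j) p := by
    rw [hFs]
    have : ⟪u, p⟫ / r < 1 := by rw [div_lt_one hr0]; exact hp
    have : 0 < 1 - ⟪u, p⟫ / r := by linarith
    positivity
  obtain ⟨j, -, hj⟩ := Finset.exists_lt_of_sum_lt (s := Finset.univ)
    (f := fun _ => (0 : ℝ)) (by simpa using hFpos)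
  refine ⟨(F j).1, ?_, ?_⟩
  · intro h0
    have h1 := hFx j
    simp only [ev, h0, inner_zero_left, zero_add] at h1 hj
    linarith
  · rw [hcnt_eq_ev, card_filter_append]
    have h2 : (Finset.univ.filter (fun i : Fin k => ev (F j) p ≤
        ev (F j) (Fin.append X (fun _ : Fin k => r • u) (Fin.natAdd n i)))) = ∅ := by
      apply Finset.filter_eq_empty_iff.2
      intro i _
      rw [Fin.append_right, hFx, not_le]
      exact hj
    rw [h2, Finset.card_empty, add_zero]
    refine (Finset.card_le_card ?_).trans (hT j)
    intro i hi
    have hi' := (Finset.mem_filter.1 hi).2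
    rw [Fin.append_left] at hi'
    rw [Finset.mem_compl]
    intro hiT
    have := hFX j i hiT
    linarith

lemma breaksDown_of_proj {d n k : ℕ} (hd : 2 ≤ d) (hk : 1 ≤ k) (X : Fin n → E d) (u : E d)
    (A : Fin (d - 1) → E d) (hA : IsAu u A)
    (hproj : ∀ z, ∃ a : E (d - 1), a ≠ 0 ∧ hcnt (fun i => proj A (X i)) a z ≤ k) :
    breaksDown X k := by
  intro C
  obtain ⟨R, hR0, hR⟩ := exists_norm_bound X
  obtain ⟨r0, hr0⟩ := ub_cover hd X u A hA hR0 hR hproj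
  have hu := hA.1
  have huu : ⟪u, u⟫ = 1 := by rw [real_inner_self_eq_norm_sq, hu]; norm_num
  have huX : ∀ i, |⟪u, X i⟫| ≤ R := fun i => by
    refine (abs_real_inner_le_norm _ _).trans ?_
    rw [hu, one_mul]; exact hR i
  set c : ℝ := (1 / 2) ^ d with hc
  have hc0 : 0 < c := by positivity
  set B : ℝ := C + ‖TukeyMedian X‖ + R with hB
  set r : ℝ := max (max r0 0) (2 * (B + 1) / c) with hr
  have hrr0 : r0 ≤ r := (le_max_left _ _).trans (le_max_left _ _)
  have hrp : 0 ≤ r := (le_max_right _ _).trans (le_max_left _ _)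
  have hrB : 2 * (B + 1) ≤ r * c := by
    rw [← div_le_iff₀ hc0]; exact le_max_right _ _
  set Y : Fin k → E d := fun _ => r • u with hY
  set Z := Fin.append X Y with hZ
  have hcov := hr0 r hrr0
  obtain ⟨h, hh1, -, -, hM, hMne, hmax⟩ := maxDepth_spec (by omega) (by omega) Z
  have hYx : ∀ a, hcnt Y a (r • u) = k := by
    intro a
    unfold hcnt
    simp [hY]
  have hxk : ∀ a : E d, a ≠ 0 → k ≤ hcnt Z a (r • u) := by
    intro a _
    rw [hZ, hcnt_append, hYx]; omega
  have hkh : h = k := by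
    apply le_antisymm
    · obtain ⟨p, hp⟩ := hMne
      obtain ⟨a, ha, hle⟩ := hcov p
      exact ((hM p).1 hp a ha).trans hle
    · obtain ⟨a, ha, hle⟩ := hmax (r • u)
      exact (hxk a ha).trans hle
  subst hkh
  have hMset : MSet Z = {p | ∀ a : E d, a ≠ 0 → h ≤ hcnt Z a p} := by
    ext p; exact hM p
  have hxM : r • u ∈ MSet Z := (hM _).2 hxk
  have hlow : ∀ p ∈ MSet Z, -R ≤ ⟪u, p⟫ := by
    intro p hp
    have hu0 : -u ≠ 0 := by
      intro h0; rw [neg_eq_zero] at h0; simp [h0] at hu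
    have h1 := hk.trans ((hM p).1 hp (-u) hu0)
    rw [hZ, hcnt_append] at h1
    by_contra hcon
    push Not at hcon
    have h2 : hcnt X (-u) p = 0 := by
      unfold hcnt
      rw [Finset.card_eq_zero, Finset.filter_eq_empty_iff]
      intro i _
      rw [not_le, inner_neg_left, inner_neg_left]
      linarith [(abs_le.1 (huX i)).1]
    have h3 : hcnt Y (-u) p = 0 := by
      unfold hcnt
      rw [Finset.card_eq_zero, Finset.filter_eq_empty_iff]
      intro i _
      rw [not_le, inner_neg_left, inner_neg_left]
      simp only [hY, inner_smul_right, huu]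
      linarith
    omega
  have havg := inner_setAverage_ge (M := MSet Z) (by rw [hMset]; exact convex_deep Z h)
    (by rw [hMset]; exact compact_deep Z hk) (r • u) hxM u (R := R) (r := r)
    (by rw [inner_smul_right, huu, mul_one]) (by linarith) hlow
  refine ⟨Y, ?_⟩
  have h1 : ⟪u, setAverage (MSet Z)⟫ ≤ ‖TukeyMedian Z‖ := by
    refine (real_inner_le_norm _ _).trans ?_
    rw [hu, one_mul]; rfl
  have h2 := norm_sub_norm_le (TukeyMedian Z) (TukeyMedian X)
  have h3 : 0 ≤ c * R := by positivity
  have h4 : c * ((r + R) / 2) = r * c / 2 + c * R / 2 := by ring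
  rw [← hc, h4] at havg
  linarith

/-- **Theorem 1.** If `X` is in general position in `ℝ^d` (`d ≥ 2`), then the
finite sample additional breakdown point of Tukey's halfspace median is
`ε(T*, Xⁿ) = λ₀ / (1 + λ₀)`, where `λ₀ = inf_{u ∈ S^{d-1}} λ*(X_uⁿ)`. -/
theorem theorem1 {d n : ℕ} (hd : 2 ≤ d) (hn : 1 ≤ n) (X : Fin n → E d)
    (hX : inGeneralPosition X) :
    FSBP X = lambda0 X / (1 + lambda0 X) := by
  classical
  have hnR : (0 : ℝ) < n := by exact_mod_cast hn
  have hex : ∃ h : ℕ, ∃ (u : E d) (A : Fin (d - 1) → E d), IsAu u A ∧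
      maxDepth (fun i => proj A (X i)) = (h : ℝ) / n := by
    obtain ⟨u, hu⟩ := exists_unit d (by omega)
    obtain ⟨A, hA⟩ := exists_IsAu (by omega) u hu
    obtain ⟨h, -, -, h3, -⟩ := maxDepth_spec (by omega) hn (fun i => proj A (X i))
    exact ⟨h, u, A, hA, h3⟩
  obtain ⟨k, ⟨u, A, hA, hk⟩, hmin⟩ : ∃ k : ℕ, (∃ (u : E d) (A : Fin (d - 1) → E d), IsAu u A ∧
      maxDepth (fun i => proj A (X i)) = (k : ℝ) / n) ∧ ∀ h : ℕ, (∃ (u : E d)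
      (A : Fin (d - 1) → E d), IsAu u A ∧
      maxDepth (fun i => proj A (X i)) = (h : ℝ) / n) → k ≤ h :=
    ⟨Nat.find hex, Nat.find_spec hex, fun h hh => Nat.find_min' hex hh⟩
  obtain ⟨h, h1, h2, h3, h4, h5, h6⟩ :=
    maxDepth_spec (by omega) hn (fun i => proj A (X i))
  have hhk : h = k := by
    rw [h3] at hk
    field_simp at hk
    exact_mod_cast hk
  subst hhk
  have hlam : lambda0 X = (h : ℝ) / n := by
    refine IsLeast.csInf_eq ⟨⟨u, A, hA, hk.symm⟩, ?_⟩
    rintro r ⟨u', A', hA', rfl⟩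
    obtain ⟨h', -, -, e, -⟩ := maxDepth_spec (by omega) hn (fun i => proj A' (X i))
    have := hmin h' ⟨u', A', hA', e⟩
    rw [e]
    gcongr
  have hdeep : ProjDeep X h := by
    intro u' A' hA'
    obtain ⟨h', -, -, e, hM, ⟨z, hz⟩, -⟩ :=
      maxDepth_spec (by omega) hn (fun i => proj A' (X i))
    exact ⟨z, fun a ha => (hmin h' ⟨u', A', hA', e⟩).trans ((hM z).1 hz a ha)⟩
  have hF : FSBP X = (h : ℝ) / ((n : ℝ) + h) := by
    refine IsLeast.csInf_eq ⟨⟨h, h1, breaksDown_of_proj hd h1 X u A hA h6, rfl⟩, ?_⟩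
    rintro r ⟨m, hm, hb, rfl⟩
    have hle : h ≤ m := by
      by_contra hlt
      exact not_breaksDown hd hn h2 X hX hdeep (not_le.1 hlt) hb
    have hleR : (h : ℝ) ≤ m := by exact_mod_cast hle
    rw [div_le_div_iff₀ (by positivity) (by positivity)]
    nlinarith [mul_le_mul_of_nonneg_left hleR hnR.le]
  rw [hF, hlam]
  have : (0 : ℝ) ≤ h := Nat.cast_nonneg _
  field_simp
end
end
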